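/- Fix integers m ≥ 1, d ≥ 2 and ν ≥ 1 and a matrix S as below. There exists a constant c > 0 depending only on d, m and ν such that the following holds. Let p be a prime, 𝓕 ∈ 𝔉(S,m) over F_p a system of total degree d with s_{0,1}·s_{1,2}⋯s_{m−1,m} ≠ 0, and let {w_n} = {(u_{n,0},…,u_{n,m})} be the sequence generated by iterating 𝓕 from some initial vector, assumed purely periodic with period τ. Then for every positive integer N ≤ τ the discrepancy Δ of the N points (u_{n,0}/p, …, u_{n,m−1}/p) ∈ [0,1)^m, n = 0,…,N−1, satisfies Δ ≤ c·p^{α}·N^{−β}·(log p)^m, where α = (m² + mν + m)/(2ν(m+ν)) and β = 1/(2ν). -/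

import Mathlib

open MvPolynomial

/-- Membership of a polynomial system `F = (F_0, …, F_m)` over `R` in the class `𝔉(S,m)`,
where `s i j` records the entries of the upper triangular matrix `S` (for `i < j`). -/
def IsFSystem {R : Type*} [CommRing R] (m : ℕ) (s : ℕ → ℕ → ℕ)
    (F : Fin (m + 1) → MvPolynomial (Fin (m + 1)) R) : Prop :=
  (∃ g h : R, g ≠ 0 ∧
      F (Fin.last m) = MvPolynomial.C g * MvPolynomial.X (Fin.last m) + MvPolynomial.C h) ∧
  ∀ i : Fin (m + 1), (i : ℕ) < m →
    ∃ (G H Gt : MvPolynomial (Fin (m + 1)) R) (g : R),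
      g ≠ 0 ∧
      F i = MvPolynomial.X i * G + H ∧
      (∀ d ∈ G.support, ∀ j : Fin (m + 1), j ≤ i → d j = 0) ∧
      (∀ d ∈ H.support, ∀ j : Fin (m + 1), j ≤ i → d j = 0) ∧
      G = MvPolynomial.C g *
          (∏ j ∈ Finset.univ.filter (fun j : Fin (m + 1) => i < j),
            MvPolynomial.X j ^ s i.val j.val) + Gt ∧
      (∀ d ∈ Gt.support, ∀ j : Fin (m + 1), i < j → d j < s i.val j.val) ∧
      (∀ d ∈ H.support, ∀ j : Fin (m + 1), i < j → d j ≤ s i.val j.val)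

/-- The iterated polynomials `F_i^{(k)}` of a sequence of polynomial systems:
`F_i^{(0)} = X_i` and `F_i^{(k)} = F_{k,i}(F_0^{(k-1)}, …, F_m^{(k-1)})`. -/
noncomputable def iterSys {R : Type*} [CommRing R] (m : ℕ)
    (Fs : ℕ → Fin (m + 1) → MvPolynomial (Fin (m + 1)) R) :
    ℕ → Fin (m + 1) → MvPolynomial (Fin (m + 1)) R
  | 0 => fun i => MvPolynomial.X i
  | k + 1 => fun i => MvPolynomial.bind₁ (iterSys m Fs k) (Fs (k + 1) i)

/-- The additive character `e_p(z) = exp(2πiz/p)` evaluated at an element of `F_p`. -/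
noncomputable def eP (p : ℕ) (x : ZMod p) : ℂ :=
  Complex.exp (2 * Real.pi * Complex.I * (x.val : ℂ) / (p : ℂ))

/-- `e_M(z) = exp(2πiz/M)` for a natural number `z`. -/
noncomputable def eM (M z : ℕ) : ℂ :=
  Complex.exp (2 * Real.pi * Complex.I * (z : ℂ) / (M : ℂ))

/-- The discrepancy of the first `N` points of a sequence in `[0,1)^s`: the supremum over
boxes `B = [a_1,b_1) × ⋯ × [a_s,b_s) ⊆ [0,1)^s` of `|T(B)/N - vol B|`. -/
noncomputable def discrepancy (s N : ℕ) (P : ℕ → Fin s → ℝ) : ℝ :=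
  sSup {D : ℝ | ∃ a b : Fin s → ℝ,
    (∀ j, 0 ≤ a j ∧ a j ≤ b j ∧ b j ≤ 1) ∧
    D = |(((Finset.range N).filter fun n => ∀ j, a j ≤ P n j ∧ P n j < b j).card : ℝ) / N -
        ∏ j, (b j - a j)|}

/-!
Iterating a triangular system keeps it triangular: `F_i^{(k)} = X_i G_i^{(k)} + H_i^{(k)}` with
`G_i^{(k)}`, `H_i^{(k)}` free of `X_0, …, X_i`. Since `s_{i,i+1} ≠ 0`, the degrees of the
`G_i^{(k)}` in `X_{i+1}` increase strictly with `k`, so these coefficients are linearly independent,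
while their total degrees grow only polynomially in `k`. Hence a nontrivial combination of
iterates is linear in some `X_i` with a nonzero coefficient, and Schwartz–Zippel bounds the
corresponding complete character sum.

To bound a sum over `N ≤ τ` points of the orbit, average it over its first `K ≈ p ^ (1 / (m + ν))`
shifts and apply Hölder's inequality with exponent `2ν`. As the points of the orbit are distinct,
the sum of `2ν`-th powers may be extended to the whole space, where it expands into complete sums.

Finally, the indicator functions of lattice boxes have Fourier transforms of `ℓ¹` norm
`O(p ^ m (log p) ^ m)`, which turns the bounds for character sums into one for the discrepancy.
-/

section Supported

variable {σ τ R : Type*} [CommSemiring R] {q : MvPolynomial σ R} {i : σ}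

lemma mem_supported_of_forall_mem_support {s : Set σ} (h : ∀ e ∈ q.support, ∀ j ∉ s, e j = 0) :
    q ∈ supported R s := by
  refine mem_supported.mpr fun j hj => ?_
  obtain ⟨e, he, hje⟩ := (mem_vars_iff_mem_support _).mp hj
  by_contra hjs
  exact Finsupp.mem_support_iff.mp hje (h e he j hjs)

lemma degreeOf_eq_zero_of_mem_supported {s : Set σ} (hq : q ∈ supported R s) (hi : i ∉ s) :
    degreeOf i q = 0 := by
  by_contra h
  exact hi (mem_supported.mp hq (mem_vars_iff_degreeOf_ne_zero.mpr h))

lemma bind₁_mem_supported {s : Set σ} {t : Set τ} {f : σ → MvPolynomial τ R}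
    (hf : ∀ j ∈ s, f j ∈ supported R t) (hq : q ∈ supported R s) : bind₁ f q ∈ supported R t := by
  classical
  refine mem_supported.mpr fun k hk => ?_
  obtain ⟨j, hj, hkj⟩ := Finset.mem_biUnion.mp (vars_bind₁ f q hk)
  exact mem_supported.mp (hf j (mem_supported.mp hq hj)) hkj

lemma eval_eq_of_mem_supported {s : Set σ} (hq : q ∈ supported R s) {v w : σ → R}
    (hvw : Set.EqOn v w s) : eval v q = eval w q :=
  hom_congr_vars (by ext; simp) (fun j hj _ => by simpa using hvw (mem_supported.mp hq hj)) rfl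

lemma exists_mem_support_eq_degreeOf (hq : q ≠ 0) (i : σ) :
    ∃ e ∈ q.support, e i = degreeOf i q := by
  obtain ⟨e, he, hdeg⟩ := Finset.exists_mem_eq_sup q.support (support_nonempty.mpr hq) (· i)
  exact ⟨e, he, by rw [degreeOf_eq_sup, hdeg]⟩

end Supported

section Degree

variable {σ τ R : Type*} [CommSemiring R] {i : σ}

lemma degreeOf_prod_X_pow [Nontrivial R] {t : Finset σ} (hi : i ∈ t)
    (n : σ → ℕ) : degreeOf i (∏ j ∈ t, (X j : MvPolynomial σ R) ^ n j) = n i := by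
  classical
  have hmonomial : ∏ j ∈ t, (X j : MvPolynomial σ R) ^ n j =
      monomial (∑ j ∈ t, Finsupp.single j (n j)) 1 := by
    simp only [monomial_sum_one, X_pow_eq_monomial]
  rw [hmonomial, degreeOf_monomial_eq _ _ one_ne_zero, Finsupp.finsetSum_apply,
    Finset.sum_eq_single_of_mem i hi fun j _ hji => Finsupp.single_eq_of_ne hji.symm,
    Finsupp.single_eq_same]

lemma totalDegree_bind₁_le {f : σ → MvPolynomial τ R} {q : MvPolynomial σ R} {B : ℕ}
    (hf : ∀ j ∈ q.vars, (f j).totalDegree ≤ B) :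
    (bind₁ f q).totalDegree ≤ q.totalDegree * B := by
  rw [bind₁, aeval_def, eval₂_eq]
  refine totalDegree_finsetSum_le fun e he => ?_
  rw [algebraMap_eq]
  calc (C (coeff e q) * ∏ j ∈ e.support, f j ^ e j).totalDegree
      ≤ ∑ j ∈ e.support, (f j ^ e j).totalDegree := by
        refine (totalDegree_mul _ _).trans ?_
        rw [totalDegree_C, zero_add]
        exact totalDegree_finsetProd _ _
    _ ≤ ∑ j ∈ e.support, e j * B := Finset.sum_le_sum fun j hj =>
        (totalDegree_pow _ _).trans
          (Nat.mul_le_mul_left _ (hf j ((mem_vars_iff_mem_support _).mpr ⟨e, he, hj⟩)))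
    _ = (e.sum fun _ n => n) * B := (Finset.sum_mul _ _ _).symm
    _ ≤ q.totalDegree * B := Nat.mul_le_mul_right _ (le_totalDegree he)

lemma degreeOf_bind₁_le {f : σ → MvPolynomial τ R} {q : MvPolynomial σ R} {k : τ}
    (hf : ∀ j ∈ q.vars, j ≠ i → degreeOf k (f j) = 0) :
    degreeOf k (bind₁ f q) ≤ degreeOf i q * degreeOf k (f i) := by
  rw [bind₁, aeval_def, eval₂_eq]
  refine (degreeOf_sum_le _ _ _).trans (Finset.sup_le fun e he => ?_)
  rw [algebraMap_eq]
  calc degreeOf k (C (coeff e q) * ∏ j ∈ e.support, f j ^ e j)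
      ≤ ∑ j ∈ e.support, degreeOf k (f j ^ e j) :=
        (degreeOf_C_mul_le _ _ _).trans (degreeOf_prod_le _ _ _)
    _ ≤ e i * degreeOf k (f i) := by
        refine (Finset.sum_le_sum fun j _ => degreeOf_pow_le k (f j) (e j)).trans ?_
        rw [Finset.sum_eq_single i]
        · intro j hj hji
          rw [hf j ((mem_vars_iff_mem_support _).mpr ⟨e, he, hj⟩) hji, mul_zero]
        · intro hi
          rw [Finsupp.notMem_support_iff.mp hi, zero_mul]
    _ ≤ degreeOf i q * degreeOf k (f i) := Nat.mul_le_mul_right _ (monomial_le_degreeOf i he)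

lemma totalDegree_le_totalDegree_X_mul_add_left (g : MvPolynomial σ R) {h : MvPolynomial σ R}
    (hh : degreeOf i h = 0) : g.totalDegree ≤ (X i * g + h).totalDegree := by
  classical
  refine Finset.sup_le fun e he => ?_
  have hcoeff : coeff (Finsupp.single i 1 + e) h = 0 := by
    by_contra hne
    have := degreeOf_le_iff.mp hh.le _ (mem_support_iff.mpr hne)
    simp at this
  have hmem : Finsupp.single i 1 + e ∈ (X i * g + h).support := by
    rw [mem_support_iff, coeff_add, coeff_X_mul, hcoeff, add_zero]
    exact mem_support_iff.mp he
  have hsum : (Finsupp.single i 1 + e).sum (fun _ n => n) = 1 + e.sum fun _ n => n := by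
    rw [Finsupp.sum_add_index' (fun _ => rfl) (fun _ _ _ => rfl), Finsupp.sum_single_index rfl]
  exact (Nat.le_add_left _ 1).trans (hsum ▸ le_totalDegree hmem)

lemma totalDegree_le_totalDegree_X_mul_add_right (g : MvPolynomial σ R) {h : MvPolynomial σ R}
    (hh : degreeOf i h = 0) : h.totalDegree ≤ (X i * g + h).totalDegree := by
  classical
  refine totalDegree_le_of_support_subset fun e he => ?_
  have hi : i ∉ e.support := by
    simpa using degreeOf_le_iff.mp hh.le e he
  rw [mem_support_iff, coeff_add, coeff_X_mul', if_neg hi, zero_add]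
  exact mem_support_iff.mp he

lemma exists_eq_X_pow_degreeOf_mul_add {q : MvPolynomial σ R} (hq : q ≠ 0) (i : σ) :
    ∃ a r : MvPolynomial σ R, q = X i ^ degreeOf i q * a + r ∧ a ≠ 0 ∧
      degreeOf i a = 0 ∧ a.vars ⊆ q.vars ∧ r.vars ⊆ q.vars ∧
      ∀ e ∈ r.support, e i < degreeOf i q := by
  classical
  set n := degreeOf i q
  set v : σ →₀ ℕ := Finsupp.single i n
  have hle : ∀ e ∈ q.support, e i ≤ n := degreeOf_le_iff.mp le_rfl
  have hsub : ∀ e ∈ (divMonomial q v).support, v + e ∈ q.support := fun e he => by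
    rwa [mem_support_iff, ← coeff_divMonomial, ← mem_support_iff]
  have hmod : ∀ e ∈ (modMonomial q v).support, e ∈ q.support ∧ ¬ v ≤ e := fun e he => by
    rw [mem_support_iff] at he
    have hve : ¬ v ≤ e := fun h => he (coeff_modMonomial_of_le q h)
    exact ⟨by rwa [coeff_modMonomial_of_not_le q hve, ← mem_support_iff] at he, hve⟩
  refine ⟨divMonomial q v, modMonomial q v, ?_, ?_, ?_, ?_, ?_, ?_⟩
  · rw [X_pow_eq_monomial, divMonomial_add_modMonomial]
  · obtain ⟨e, he, hei⟩ := exists_mem_support_eq_degreeOf hq i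
    have hve : v ≤ e := by simpa [v] using hei.ge
    refine ne_zero_iff.mpr ⟨e - v, ?_⟩
    rw [coeff_divMonomial, add_tsub_cancel_of_le hve]
    exact mem_support_iff.mp he
  · refine Nat.le_zero.mp (degreeOf_le_iff.mpr fun e he => ?_)
    have := hle _ (hsub e he)
    simpa [v] using this
  · intro j hj
    obtain ⟨e, he, hje⟩ := (mem_vars_iff_mem_support _).mp hj
    exact (mem_vars_iff_mem_support _).mpr ⟨v + e, hsub e he, by simp_all⟩
  · intro j hj
    obtain ⟨e, he, hje⟩ := (mem_vars_iff_mem_support _).mp hj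
    exact (mem_vars_iff_mem_support _).mpr ⟨e, (hmod e he).1, hje⟩
  · intro e he
    refine lt_of_not_ge fun h => (hmod e he).2 ?_
    simpa [v] using h

end Degree

lemma linearIndependent_of_degreeOf_injective {ι σ R : Type*} [CommRing R] [IsDomain R]
    {f : ι → MvPolynomial σ R} {i : σ} (hf : ∀ k, f k ≠ 0)
    (hinj : Function.Injective fun k => degreeOf i (f k)) : LinearIndependent R f := by
  classical
  refine linearIndependent_iff'.mpr fun s c hsum => ?_
  by_contra! hne
  obtain ⟨k₀, hk₀, hc₀⟩ := hne
  obtain ⟨k, hk, hmax⟩ := (s.filter (c · ≠ 0)).exists_max_image (fun k => degreeOf i (f k))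
    ⟨k₀, by simp [hk₀, hc₀]⟩
  rw [Finset.mem_filter] at hk
  obtain ⟨e, he, hei⟩ := exists_mem_support_eq_degreeOf (hf k) i
  have hcoeff : ∀ l ∈ s, l ≠ k → coeff e (c l • f l) = 0 := by
    intro l hl hlk
    by_cases hcl : c l = 0
    · simp [hcl]
    have hlt : degreeOf i (f l) < e i := hei ▸
      lt_of_le_of_ne (hmax l (by simp [hl, hcl])) fun h => hlk (hinj h)
    have : e ∉ (f l).support := fun hmem => (monomial_le_degreeOf i hmem).not_gt hlt
    rw [coeff_smul, notMem_support_iff.mp this, smul_zero]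
  have hsum_coeff := congr_arg (coeff e) hsum
  rw [coeff_sum, Finset.sum_eq_single_of_mem k hk.1 hcoeff, coeff_smul, coeff_zero] at hsum_coeff
  exact mul_ne_zero hk.2 (mem_support_iff.mp he) hsum_coeff

/-- The system `f` is triangular with coefficients `g`: `f i = X i * g i + h i`, where `g i` and
`h i` involve only the variables `X j` with `i < j`. The remainder `h i` is not part of the data;
it is `f i - X i * g i`. -/
structure IsTriangular {σ R : Type*} [Preorder σ] [CommRing R] (f g : σ → MvPolynomial σ R) :
    Prop where
  coeff_mem_supported : ∀ i, g i ∈ supported R (Set.Ioi i)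
  sub_mem_supported : ∀ i, f i - X i * g i ∈ supported R (Set.Ioi i)

namespace IsTriangular

section Preorder

variable {σ R : Type*} [Preorder σ] [CommRing R] {f g F G : σ → MvPolynomial σ R} {i j : σ}

lemma mem_supported_Ici [Nontrivial R] (h : IsTriangular f g) (i : σ) :
    f i ∈ supported R (Set.Ici i) := by
  have hle : supported R (Set.Ioi i) ≤ supported R (Set.Ici i) :=
    supported_mono Set.Ioi_subset_Ici_self
  rw [← add_sub_cancel (X i * g i) (f i)]
  exact add_mem (mul_mem (X_mem_supported.mpr Set.self_mem_Ici) (hle (h.coeff_mem_supported i)))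
    (hle (h.sub_mem_supported i))

lemma bind₁_mem_supported_Ioi [Nontrivial R] (h : IsTriangular f g) {q : MvPolynomial σ R}
    (hq : q ∈ supported R (Set.Ioi i)) : bind₁ f q ∈ supported R (Set.Ioi i) :=
  bind₁_mem_supported
    (fun j hj => supported_mono (Set.Ici_subset_Ioi.mpr hj) (h.mem_supported_Ici j)) hq

lemma degreeOf_coeff (h : IsTriangular f g) (i : σ) : degreeOf i (g i) = 0 :=
  degreeOf_eq_zero_of_mem_supported (h.coeff_mem_supported i) (lt_irrefl i)

lemma degreeOf_sub (h : IsTriangular f g) (i : σ) : degreeOf i (f i - X i * g i) = 0 :=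
  degreeOf_eq_zero_of_mem_supported (h.sub_mem_supported i) (lt_irrefl i)

lemma degreeOf_of_lt [Nontrivial R] (h : IsTriangular f g) (hij : i < j) :
    degreeOf i (f j) = 0 :=
  degreeOf_eq_zero_of_mem_supported (h.mem_supported_Ici j) (not_le_of_gt hij)

lemma degreeOf_self [IsDomain R] (h : IsTriangular f g) (hi : g i ≠ 0) : degreeOf i (f i) = 1 := by
  have hmul : degreeOf i (X i * g i) = 1 := by
    rw [degreeOf_mul_eq (X_ne_zero i) hi, degreeOf_X_self, h.degreeOf_coeff]
  rw [← add_sub_cancel (X i * g i) (f i),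
    degreeOf_add_eq_of_degreeOf_lt (by rw [hmul, h.degreeOf_sub]; exact one_pos), hmul]

lemma totalDegree_coeff_le (h : IsTriangular f g) (i : σ) :
    (g i).totalDegree ≤ (f i).totalDegree := by
  rw [← add_sub_cancel (X i * g i) (f i)]
  exact totalDegree_le_totalDegree_X_mul_add_left (g i) (h.degreeOf_sub i)

lemma totalDegree_sub_le (h : IsTriangular f g) (i : σ) :
    (f i - X i * g i).totalDegree ≤ (f i).totalDegree := by
  conv_rhs => rw [← add_sub_cancel (X i * g i) (f i)]
  exact totalDegree_le_totalDegree_X_mul_add_right (g i) (h.degreeOf_sub i)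

protected lemma X : IsTriangular (X : σ → MvPolynomial σ R) 1 where
  coeff_mem_supported _ := one_mem _
  sub_mem_supported _ := by simp

lemma comp [Nontrivial R] (hf : IsTriangular f g) (hF : IsTriangular F G) :
    IsTriangular (fun i => bind₁ f (F i)) (fun i => g i * bind₁ f (G i)) where
  coeff_mem_supported i :=
    mul_mem (hf.coeff_mem_supported i) (hf.bind₁_mem_supported_Ioi (hF.coeff_mem_supported i))
  sub_mem_supported i := by
    have hsplit : bind₁ f (F i) - X i * (g i * bind₁ f (G i)) =
        bind₁ f (F i - X i * G i) + (f i - X i * g i) * bind₁ f (G i) := by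
      rw [map_sub, map_mul, bind₁_X_right]
      ring
    rw [hsplit]
    exact add_mem (hf.bind₁_mem_supported_Ioi (hF.sub_mem_supported i))
      (mul_mem (hf.sub_mem_supported i) (hf.bind₁_mem_supported_Ioi (hF.coeff_mem_supported i)))

end Preorder

section LinearOrder

variable {σ R : Type*} [LinearOrder σ] [CommRing R] [IsDomain R] {f g : σ → MvPolynomial σ R}
  {i : σ} {q : MvPolynomial σ R}

lemma degreeOf_bind₁_of_forall_ne_zero (h : IsTriangular f g) (hi : g i ≠ 0)
    (hq : q ∈ supported R (Set.Ici i)) (hq0 : q ≠ 0)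
    (hne : ∀ a ≠ 0, a.vars ⊆ q.vars.erase i → bind₁ f a ≠ 0) :
    degreeOf i (bind₁ f q) = degreeOf i q := by
  have hle : ∀ a : MvPolynomial σ R, a.vars ⊆ q.vars →
      degreeOf i (bind₁ f a) ≤ degreeOf i a := fun a ha => by
    refine (degreeOf_bind₁_le (i := i) fun j hj hji => ?_).trans_eq
      (by rw [h.degreeOf_self hi, mul_one])
    exact h.degreeOf_of_lt (lt_of_le_of_ne (mem_supported.mp hq (ha hj)) hji.symm)
  rcases Nat.eq_zero_or_pos (degreeOf i q) with hzero | hpos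
  · exact le_antisymm (hle q subset_rfl) (hzero ▸ Nat.zero_le _)
  obtain ⟨a, r, hqar, ha0, hai, havars, hrvars, hr⟩ := exists_eq_X_pow_degreeOf_mul_add hq0 i
  set n := degreeOf i q
  have hf0 : f i ≠ 0 := ne_zero_of_degreeOf_ne_zero (by rw [h.degreeOf_self hi]; exact one_ne_zero)
  have hba : bind₁ f a ≠ 0 := hne a ha0 fun j hj => Finset.mem_erase.mpr
    ⟨fun hji => mem_vars_iff_degreeOf_ne_zero.mp (hji ▸ hj) hai, havars hj⟩
  have hlead : degreeOf i (f i ^ n * bind₁ f a) = n := by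
    rw [degreeOf_mul_eq (pow_ne_zero _ hf0) hba, degreeOf_pow_eq _ _ _ hf0, h.degreeOf_self hi,
      Nat.le_zero.mp ((hle a havars).trans_eq hai), mul_one, add_zero]
  have hrest : degreeOf i (bind₁ f r) < n :=
    (hle r hrvars).trans_lt ((degreeOf_lt_iff hpos).mpr hr)
  conv_lhs => rw [hqar]
  rw [map_add, map_mul, map_pow, bind₁_X_right,
    degreeOf_add_eq_of_degreeOf_lt (by rwa [hlead]), hlead]

lemma bind₁_ne_zero (h : IsTriangular f g) (hg : ∀ i, g i ≠ 0) (hq : q ≠ 0) :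
    bind₁ f q ≠ 0 := by
  induction hn : q.vars.card using Nat.strong_induction_on generalizing q with
  | _ n ih =>
  subst hn
  rcases q.vars.eq_empty_or_nonempty with hvars | hvars
  · rw [vars_eq_empty_iff_eq_C] at hvars
    rw [hvars, C_ne_zero] at hq
    rwa [hvars, bind₁_C_right, C_ne_zero]
  · set i := q.vars.min' hvars
    have hi : i ∈ q.vars := Finset.min'_mem _ _
    have hdeg := h.degreeOf_bind₁_of_forall_ne_zero (hg i)
      (mem_supported.mpr fun j hj => Finset.min'_le _ _ hj) hq fun a ha ha' =>
        ih _ ((Finset.card_le_card ha').trans_lt (Finset.card_erase_lt_of_mem hi)) ha rfl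
    exact ne_zero_of_degreeOf_ne_zero (hdeg ▸ mem_vars_iff_degreeOf_ne_zero.mp hi)

lemma degreeOf_bind₁ (h : IsTriangular f g) (hg : ∀ i, g i ≠ 0)
    (hq : q ∈ supported R (Set.Ici i)) : degreeOf i (bind₁ f q) = degreeOf i q := by
  rcases eq_or_ne q 0 with rfl | hq0
  · simp
  · exact h.degreeOf_bind₁_of_forall_ne_zero (hg i) hq hq0 fun a ha _ => h.bind₁_ne_zero hg ha

end LinearOrder

end IsTriangular

section Iterates

variable {R : Type*} [CommRing R] {m d : ℕ} {F G : Fin (m + 1) → MvPolynomial (Fin (m + 1)) R}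

/-- For a triangular system `F` with coefficients `G`, the coefficient
`∏_{l < k} G_i(F^{(l)})` of `X_i` in the iterate `F_i^{(k)}`. -/
noncomputable def iterCoeff (F G : Fin (m + 1) → MvPolynomial (Fin (m + 1)) R) (k : ℕ)
    (i : Fin (m + 1)) : MvPolynomial (Fin (m + 1)) R :=
  ∏ l ∈ Finset.range k, bind₁ (iterSys m (fun _ => F) l) (G i)

lemma eval_iterSys {u : ℕ → Fin (m + 1) → R} (hu : ∀ n i, u (n + 1) i = eval (u n) (F i))
    (n k : ℕ) (i : Fin (m + 1)) : eval (u n) (iterSys m (fun _ => F) k i) = u (n + k) i := by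
  induction k generalizing i with
  | zero => exact eval_X i
  | succ k ih =>
    have hstep : eval (u n) (bind₁ (iterSys m (fun _ => F) k) (F i)) =
        eval (fun j => eval (u n) (iterSys m (fun _ => F) k j)) (F i) := by
      rw [eval, eval₂Hom_bind₁]
      rfl
    rw [← add_assoc, hu, iterSys, hstep, funext fun j => ih j]

namespace IsTriangular

lemma iterate [Nontrivial R] (h : IsTriangular F G) (k : ℕ) :
    IsTriangular (iterSys m (fun _ => F) k) (iterCoeff F G k) := by
  induction k with
  | zero =>
    have hone : iterCoeff F G 0 = 1 := funext fun i => Finset.prod_range_zero _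
    exact hone ▸ IsTriangular.X
  | succ k ih =>
    have hsucc : iterCoeff F G (k + 1) = fun i =>
        iterCoeff F G k i * bind₁ (iterSys m (fun _ => F) k) (G i) :=
      funext fun i => Finset.prod_range_succ _ _
    exact hsucc ▸ ih.comp h

lemma iterCoeff_ne_zero [IsDomain R] (h : IsTriangular F G) (hG : ∀ i, G i ≠ 0) (k : ℕ)
    (i : Fin (m + 1)) : iterCoeff F G k i ≠ 0 := by
  induction k generalizing i with
  | zero => simp [iterCoeff]
  | succ k ih =>
    rw [iterCoeff, Finset.prod_range_succ]
    exact mul_ne_zero (ih i) ((h.iterate k).bind₁_ne_zero ih (hG i))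

lemma degreeOf_iterCoeff [IsDomain R] (h : IsTriangular F G) (hG : ∀ i, G i ≠ 0) (k : ℕ)
    {i j : Fin (m + 1)} (hij : G i ∈ supported R (Set.Ici j)) :
    degreeOf j (iterCoeff F G k i) = k * degreeOf j (G i) := by
  have hit := h.iterCoeff_ne_zero hG
  rw [iterCoeff, degreeOf_prod_eq _ _ fun l _ => (h.iterate l).bind₁_ne_zero (hit l) (hG i),
    Finset.sum_congr rfl fun l _ => (h.iterate l).degreeOf_bind₁ (hit l) hij]
  simp

lemma totalDegree_iterSys_le [Nontrivial R] (h : IsTriangular F G)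
    (hd : ∀ i, (F i).totalDegree ≤ d) (k : ℕ) (i : Fin (m + 1)) :
    (iterSys m (fun _ => F) k i).totalDegree ≤ (d * k + 1) ^ (m - i : ℕ) := by
  induction k generalizing i with
  | zero => simp [iterSys]
  | succ k ih =>
    set f := iterSys m (fun _ => F) k
    obtain ⟨B, hB, hBle⟩ : ∃ B, (∀ j, i < j → (f j).totalDegree ≤ B) ∧
        (d * k + 1) ^ (m - i : ℕ) + d * B ≤ (d * (k + 1) + 1) ^ (m - i : ℕ) := by
      rcases Fin.eq_castSucc_or_eq_last i with ⟨i, rfl⟩ | rfl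
      · refine ⟨(d * k + 1) ^ (m - (i + 1) : ℕ), fun j hj => (ih j).trans ?_, ?_⟩
        · exact Nat.pow_le_pow_right (Nat.succ_pos _) (Nat.sub_le_sub_left hj m)
        · have hexp : m - (i.castSucc : ℕ) = m - (i + 1) + 1 := by
            rw [Fin.val_castSucc]
            omega
          rw [hexp, pow_succ, pow_succ]
          calc (d * k + 1) ^ (m - (i + 1)) * (d * k + 1) + d * (d * k + 1) ^ (m - (i + 1))
              = (d * k + 1) ^ (m - (i + 1)) * (d * (k + 1) + 1) := by ring
            _ ≤ _ := by gcongr; omega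
      · exact ⟨0, fun j hj => absurd (Fin.le_last j) hj.not_ge, by simp⟩
    have hbind : ∀ q ∈ supported R (Set.Ioi i), q.totalDegree ≤ d →
        (bind₁ f q).totalDegree ≤ d * B := fun q hq hqd =>
      (totalDegree_bind₁_le fun j hj => hB j (mem_supported.mp hq hj)).trans
        (Nat.mul_le_mul_right B hqd)
    have hsplit : iterSys m (fun _ => F) (k + 1) i =
        f i * bind₁ f (G i) + bind₁ f (F i - X i * G i) := by
      rw [map_sub, map_mul, bind₁_X_right, add_sub_cancel]
      rfl
    rw [hsplit]
    refine (totalDegree_add _ _).trans (max_le ?_ ?_)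
    · exact ((totalDegree_mul _ _).trans (add_le_add (ih i) (hbind _ (h.coeff_mem_supported i)
        ((h.totalDegree_coeff_le i).trans (hd i))))).trans hBle
    · exact (hbind _ (h.sub_mem_supported i) ((h.totalDegree_sub_le i).trans (hd i))).trans
        ((Nat.le_add_left _ _).trans hBle)

lemma totalDegree_iterCoeff_le [Nontrivial R] (h : IsTriangular F G)
    (hd : ∀ i, (F i).totalDegree ≤ d) {k K : ℕ} (hk : k < K) (i : Fin (m + 1)) :
    (iterCoeff F G k i).totalDegree ≤ ((d + 1) * K) ^ m := by
  have hbase : d * k + 1 ≤ (d + 1) * K := by nlinarith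
  calc (iterCoeff F G k i).totalDegree
      ≤ (iterSys m (fun _ => F) k i).totalDegree := (h.iterate k).totalDegree_coeff_le i
    _ ≤ (d * k + 1) ^ (m - i : ℕ) := h.totalDegree_iterSys_le hd k i
    _ ≤ (d * k + 1) ^ m := Nat.pow_le_pow_right (Nat.succ_pos _) (Nat.sub_le m i)
    _ ≤ ((d + 1) * K) ^ m := Nat.pow_le_pow_left hbase m

end IsTriangular

/-- A triangular system in which every coefficient `G_i` with `i < m` involves the next variable
`X_{i+1}`, and the constant `G_m` is nonzero. The systems in `𝔉(S,m)` with
`s_{0,1} ⋯ s_{m-1,m} ≠ 0` are of this kind. -/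
structure IsLinkedTriangular (F G : Fin (m + 1) → MvPolynomial (Fin (m + 1)) R) : Prop
    extends IsTriangular F G where
  coeff_last_ne_zero : G (Fin.last m) ≠ 0
  degreeOf_succ_pos : ∀ i : Fin m, 0 < degreeOf i.succ (G i.castSucc)

namespace IsLinkedTriangular

lemma coeff_ne_zero (h : IsLinkedTriangular F G) (i : Fin (m + 1)) : G i ≠ 0 := by
  rcases Fin.eq_castSucc_or_eq_last i with ⟨i, rfl⟩ | rfl
  · exact ne_zero_of_degreeOf_ne_zero (h.degreeOf_succ_pos i).ne'
  · exact h.coeff_last_ne_zero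

lemma linearIndependent_iterCoeff [IsDomain R] (h : IsLinkedTriangular F G) (i : Fin m) :
    LinearIndependent R fun k => iterCoeff F G k i.castSucc := by
  have hmem : G i.castSucc ∈ supported R (Set.Ici i.succ) :=
    supported_mono (fun j hj => Fin.castSucc_lt_iff_succ_le.mp hj)
      (h.coeff_mem_supported i.castSucc)
  refine linearIndependent_of_degreeOf_injective (i := i.succ)
    (fun k => h.iterCoeff_ne_zero h.coeff_ne_zero k _) fun k l hkl => ?_
  simp only [h.degreeOf_iterCoeff h.coeff_ne_zero _ hmem] at hkl
  exact Nat.eq_of_mul_eq_mul_right (h.degreeOf_succ_pos i) hkl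

end IsLinkedTriangular

lemma IsFSystem.exists_coeff_castSucc [IsDomain R] {s : ℕ → ℕ → ℕ} (hF : IsFSystem m s F)
    {i : Fin m} (hs : 0 < s i (i + 1)) :
    ∃ G ∈ supported R (Set.Ioi i.castSucc),
      F i.castSucc - X i.castSucc * G ∈ supported R (Set.Ioi i.castSucc) ∧
      0 < degreeOf i.succ G := by
  obtain ⟨G, H, Gt, g, hg, hFi, hG, hH, hGeq, hGt, -⟩ := hF.2 i.castSucc i.isLt
  have hlead : degreeOf i.succ (C g * ∏ j ∈ Finset.univ.filter (i.castSucc < ·),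
      (X j : MvPolynomial (Fin (m + 1)) R) ^ s i.castSucc j) = s i (i + 1) := by
    rw [degreeOf_C_mul _ _ (mem_nonZeroDivisors_of_ne_zero hg),
      degreeOf_prod_X_pow (by simp) (fun j : Fin (m + 1) => s i.castSucc j), Fin.val_succ,
      Fin.val_castSucc]
  have hlower : degreeOf i.succ Gt < s i (i + 1) :=
    (degreeOf_lt_iff hs).mpr fun e he => hGt e he i.succ i.castSucc_lt_succ
  refine ⟨G, mem_supported_of_forall_mem_support fun e he j hj => hG e he j (not_lt.mp hj),
    ?_, ?_⟩
  · rw [hFi, add_sub_cancel_left]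
    exact mem_supported_of_forall_mem_support fun e he j hj => hH e he j (not_lt.mp hj)
  · rw [hGeq, degreeOf_add_eq_of_degreeOf_lt (hlower.trans_eq hlead.symm)]
    exact hs.trans_eq hlead.symm

lemma IsFSystem.exists_isLinkedTriangular [IsDomain R] {s : ℕ → ℕ → ℕ} (hF : IsFSystem m s F)
    (hs : ∏ i ∈ Finset.range m, s i (i + 1) ≠ 0) : ∃ G, IsLinkedTriangular F G := by
  obtain ⟨g, h, hg, hlast⟩ := hF.1
  choose G hGmem hsub hpos using fun i : Fin m => hF.exists_coeff_castSucc
    (Nat.pos_of_ne_zero (Finset.prod_ne_zero_iff.mp hs i (Finset.mem_range.mpr i.isLt)))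
  have hC : ∀ c : R, C c ∈ supported R (Set.Ioi (Fin.last m)) :=
    (supported R (Set.Ioi (Fin.last m))).algebraMap_mem
  refine ⟨Fin.snoc (α := fun _ => MvPolynomial (Fin (m + 1)) R) G (C g),
    { coeff_mem_supported := Fin.lastCases ?_ fun i => ?_
      sub_mem_supported := Fin.lastCases ?_ fun i => ?_
      coeff_last_ne_zero := ?_
      degreeOf_succ_pos := fun i => ?_ }⟩
  · rwa [Fin.snoc_last, C_ne_zero]
  · rw [Fin.snoc_castSucc]
    exact hpos i
  · rw [Fin.snoc_last]
    exact hC g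
  · rw [Fin.snoc_castSucc]
    exact hGmem i
  · rw [Fin.snoc_last, hlast, mul_comm, add_sub_cancel_left]
    exact hC h
  · rw [Fin.snoc_castSucc]
    exact hsub i

/-- The linear form `∑ a_i F_i^{(k)}` in the first `m` components of the iterate `F^{(k)}`. -/
noncomputable def iterForm (F : Fin (m + 1) → MvPolynomial (Fin (m + 1)) R) (a : Fin m → R)
    (k : ℕ) : MvPolynomial (Fin (m + 1)) R :=
  ∑ i, C (a i) * iterSys m (fun _ => F) k i.castSucc

lemma eval_iterForm {u : ℕ → Fin (m + 1) → R} (hu : ∀ n i, u (n + 1) i = eval (u n) (F i))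
    (a : Fin m → R) (n k : ℕ) :
    eval (u n) (iterForm F a k) = ∑ i, a i * u (n + k) i.castSucc := by
  simp only [iterForm, map_sum, map_mul, eval_C, eval_iterSys hu]

lemma IsTriangular.iterForm_sub_mem_supported [Nontrivial R] (h : IsTriangular F G)
    {a : Fin m → R} {i : Fin m} (ha : ∀ j < i, a j = 0) (k : ℕ) :
    iterForm F a k - X i.castSucc * (C (a i) * iterCoeff F G k i.castSucc) ∈
      supported R (Set.Ioi i.castSucc) := by
  have hC : ∀ c : R, C c ∈ supported R (Set.Ioi i.castSucc) :=
    (supported R (Set.Ioi i.castSucc)).algebraMap_mem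
  have hsplit : iterForm F a k - X i.castSucc * (C (a i) * iterCoeff F G k i.castSucc) =
      C (a i) * (iterSys m (fun _ => F) k i.castSucc -
        X i.castSucc * iterCoeff F G k i.castSucc) +
      ∑ j ∈ Finset.univ.erase i, C (a j) * iterSys m (fun _ => F) k j.castSucc := by
    rw [iterForm, ← Finset.add_sum_erase _ _ (Finset.mem_univ i)]
    ring
  rw [hsplit]
  refine add_mem (mul_mem (hC _) ((h.iterate k).sub_mem_supported _)) (sum_mem fun j hj => ?_)
  rcases lt_or_gt_of_ne (Finset.ne_of_mem_erase hj) with hji | hij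
  · simp [ha j hji]
  · exact mul_mem (hC _) (supported_mono
      (Set.Ici_subset_Ioi.mpr (Fin.castSucc_lt_castSucc_iff.mpr hij))
      ((h.iterate k).mem_supported_Ici _))

end Iterates

section CharacterSums

lemma addChar_sum_eq_prod {ι A M : Type*} [AddCommMonoid A] [CommMonoid M] (ψ : AddChar A M)
    (s : Finset ι) (f : ι → A) : ψ (∑ i ∈ s, f i) = ∏ i ∈ s, ψ (f i) :=
  map_prod ψ.toMonoidHom (fun i => Multiplicative.ofAdd (f i)) s

lemma norm_sum_addChar_mul_add_le_card {σ R : Type*} [Fintype σ] [DecidableEq σ] [CommRing R]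
    [Fintype R] [DecidableEq R] {ψ : AddChar R ℂ} (hψ : ψ.IsPrimitive) (i : σ)
    {L Q : (σ → R) → R} (hL : ∀ w t, L (w + Pi.single i t) = L w)
    (hQ : ∀ w t, Q (w + Pi.single i t) = Q w) :
    ‖∑ w, ψ (w i * L w + Q w)‖ ≤ (Finset.univ.filter fun w => L w = 0).card := by
  set S := ∑ w, ψ (w i * L w + Q w)
  have hshift : ∀ t : R, S = ∑ w, ψ (w i * L w + Q w) * ψ (t * L w) := fun t => by
    refine (Equiv.sum_comp (Equiv.addRight (Pi.single i t : σ → R)) _).symm.trans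
      (Finset.sum_congr rfl fun w _ => ?_)
    simp only [Equiv.coe_addRight]
    rw [hL, hQ, ← AddChar.map_add_eq_mul, Pi.add_apply, Pi.single_eq_same]
    congr 1
    ring
  have haverage : (Fintype.card R : ℂ) * S =
      ∑ w, ψ (w i * L w + Q w) * if L w = 0 then (Fintype.card R : ℂ) else 0 := by
    calc (Fintype.card R : ℂ) * S = ∑ _t : R, S := by simp
      _ = ∑ t : R, ∑ w, ψ (w i * L w + Q w) * ψ (t * L w) :=
        Finset.sum_congr rfl fun t _ => hshift t
      _ = _ := by
        rw [Finset.sum_comm]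
        refine Finset.sum_congr rfl fun w _ => ?_
        rw [← Finset.mul_sum, AddChar.sum_mulShift _ hψ, Nat.cast_ite, Nat.cast_zero]
  have hcard : (0 : ℝ) < Fintype.card R := Nat.cast_pos.mpr Fintype.card_pos
  refine le_of_mul_le_mul_left ?_ hcard
  calc (Fintype.card R : ℝ) * ‖S‖ = ‖(Fintype.card R : ℂ) * S‖ := by simp
    _ ≤ ∑ w, ‖ψ (w i * L w + Q w) * if L w = 0 then (Fintype.card R : ℂ) else 0‖ :=
      haverage ▸ norm_sum_le _ _
    _ = ∑ w, if L w = 0 then (Fintype.card R : ℝ) else 0 := by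
      refine Finset.sum_congr rfl fun w _ => ?_
      rw [norm_mul, AddChar.norm_apply, one_mul, apply_ite norm, Complex.norm_natCast, norm_zero]
    _ = _ := by rw [← Finset.sum_filter, Finset.sum_const, nsmul_eq_mul, mul_comm]

variable {𝔽 : Type*} [Field 𝔽] [Fintype 𝔽]

lemma card_eval_eq_zero_le [DecidableEq 𝔽] {m : ℕ} {L : MvPolynomial (Fin (m + 1)) 𝔽} (hL : L ≠ 0) :
    (Finset.univ.filter fun w => eval w L = 0).card ≤ L.totalDegree * Fintype.card 𝔽 ^ m := by
  have hcard : (0 : ℚ≥0) < Fintype.card 𝔽 := Nat.cast_pos.mpr Fintype.card_pos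
  have hsz := schwartz_zippel_totalDegree hL (Finset.univ : Finset 𝔽)
  rw [Fintype.piFinset_univ, Finset.card_univ, div_le_div_iff₀ (by positivity) hcard,
    pow_succ, ← mul_assoc] at hsz
  exact_mod_cast le_of_mul_le_mul_right hsz hcard

lemma norm_sum_addChar_eval_le {ψ : AddChar 𝔽 ℂ} (hψ : ψ.IsPrimitive) {m : ℕ} {i : Fin (m + 1)}
    {P L : MvPolynomial (Fin (m + 1)) 𝔽} (hL0 : L ≠ 0) (hL : L ∈ supported 𝔽 {i}ᶜ)
    (hP : P - X i * L ∈ supported 𝔽 {i}ᶜ) :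
    ‖∑ w, ψ (eval w P)‖ ≤ L.totalDegree * (Fintype.card 𝔽 : ℝ) ^ m := by
  classical
  have hinv : ∀ q ∈ supported 𝔽 {i}ᶜ, ∀ w t,
      eval (w + Pi.single i t) q = eval w q := fun q hq w t =>
    eval_eq_of_mem_supported hq fun j (hj : j ≠ i) => by simp [hj]
  have hsum := norm_sum_addChar_mul_add_le_card hψ i (L := fun w => eval w L)
    (Q := fun w => eval w (P - X i * L)) (hinv L hL) (hinv _ hP)
  simp only [map_sub, map_mul, eval_X, add_sub_cancel] at hsum
  exact hsum.trans (mod_cast card_eval_eq_zero_le hL0)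

end CharacterSums

lemma sum_comp_ne_sum_comp_of_notMem_range {α ι R M : Type*} [Fintype α] [CommRing R]
    [AddCommGroup M] [Module R M] {f : ι → M} (hf : LinearIndependent R f) {p : ℕ} [CharP R p]
    (hp : Fintype.card α < p) {k l : α → ι} {a : α} (ha : l a ∉ Set.range k) :
    ∑ b, f (k b) ≠ ∑ b, f (l b) := by
  classical
  have hcomb : ∀ k : α → ι,
      Finsupp.linearCombination R f (∑ b, Finsupp.single (k b) 1) = ∑ b, f (k b) := by simp
  rw [← hcomb, ← hcomb]
  intro h
  have hcoeff := DFunLike.congr_fun (hf h) (l a)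
  simp only [Finsupp.finsetSum_apply, Finsupp.single_apply, Finset.sum_boole] at hcoeff
  rw [Finset.filter_false_of_mem fun b _ hb => ha ⟨b, hb⟩, Finset.card_empty, Nat.cast_zero,
    eq_comm, CharP.cast_eq_zero_iff R p] at hcoeff
  have hpos : 0 < (Finset.univ.filter fun b => l b = l a).card :=
    Finset.card_pos.mpr ⟨a, by simp⟩
  exact (Nat.le_of_dvd hpos hcoeff).not_gt ((Finset.card_filter_le _ _).trans_lt hp)

section Moments

variable {κ W R : Type*} [Fintype κ] [Fintype W] [AddCommGroup R] [Finite R]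

lemma card_filter_forall_exists_eq_le [DecidableEq κ] (ν : ℕ) :
    (Finset.univ.filter fun kl : (Fin ν → κ) × (Fin ν → κ) =>
      ∀ j, ∃ b, kl.1 b = kl.2 j).card ≤ ν ^ ν * Fintype.card κ ^ ν := by
  have hsubset : (Finset.univ.filter fun kl : (Fin ν → κ) × (Fin ν → κ) =>
      ∀ j, ∃ b, kl.1 b = kl.2 j) ⊆
      Finset.univ.image fun x : (Fin ν → Fin ν) × (Fin ν → κ) => (x.2, x.2 ∘ x.1) := by
    intro kl hkl
    choose σ hσ using (Finset.mem_filter.mp hkl).2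
    exact Finset.mem_image.mpr ⟨(σ, kl.1), Finset.mem_univ _, Prod.ext rfl (funext hσ)⟩
  refine (Finset.card_le_card hsubset).trans (Finset.card_image_le.trans ?_)
  simp

lemma norm_sum_addChar_pow_two_mul (ψ : AddChar R ℂ) (f : κ → R) (ν : ℕ) :
    ((‖∑ k, ψ (f k)‖ ^ (2 * ν) : ℝ) : ℂ) =
      ∑ kl : (Fin ν → κ) × (Fin ν → κ), ψ (∑ j, f (kl.1 j) - ∑ j, f (kl.2 j)) := by
  classical
  rw [pow_mul, Complex.ofReal_pow, Complex.ofReal_pow, ← Complex.mul_conj', mul_pow, map_sum,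
    Fintype.sum_pow, Fintype.sum_pow, Finset.sum_mul_sum, Fintype.sum_prod_type]
  refine Finset.sum_congr rfl fun k _ => Finset.sum_congr rfl fun l _ => ?_
  rw [sub_eq_add_neg, AddChar.map_add_eq_mul, ← Finset.sum_neg_distrib, addChar_sum_eq_prod,
    addChar_sum_eq_prod]
  simp only [AddChar.map_neg_eq_conj]

-- The pairs `(k, l)` in which some `l j` is not among the `k j'` show cancellation; the others are
-- at most `ν ^ ν * K ^ ν` in number and are bounded trivially.
lemma sum_norm_sum_addChar_pow_le (ψ : AddChar R ℂ) (f : κ → W → R) (ν : ℕ) {B : ℝ} (hB0 : 0 ≤ B)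
    (hB : ∀ (k l : Fin ν → κ) (j : Fin ν), l j ∉ Set.range k →
      ‖∑ w, ψ (∑ j, f (k j) w - ∑ j, f (l j) w)‖ ≤ B) :
    ∑ w, ‖∑ k, ψ (f k w)‖ ^ (2 * ν) ≤
      (ν : ℝ) ^ ν * (Fintype.card κ : ℝ) ^ ν * Fintype.card W +
        (Fintype.card κ : ℝ) ^ (2 * ν) * B := by
  classical
  have hexpand : ((∑ w, ‖∑ k, ψ (f k w)‖ ^ (2 * ν) : ℝ) : ℂ) =
      ∑ kl : (Fin ν → κ) × (Fin ν → κ), ∑ w, ψ (∑ j, f (kl.1 j) w - ∑ j, f (kl.2 j) w) := by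
    rw [Complex.ofReal_sum, Finset.sum_comm]
    exact Finset.sum_congr rfl fun w _ => norm_sum_addChar_pow_two_mul ψ (f · w) ν
  have hterm : ∀ kl : (Fin ν → κ) × (Fin ν → κ),
      ‖∑ w, ψ (∑ j, f (kl.1 j) w - ∑ j, f (kl.2 j) w)‖ ≤
        (if ∀ j, ∃ b, kl.1 b = kl.2 j then (Fintype.card W : ℝ) else 0) + B := by
    intro kl
    split_ifs with hkl
    · refine le_add_of_le_of_nonneg ((norm_sum_le _ _).trans ?_) hB0
      simp
    · obtain ⟨j, hj⟩ := not_forall.mp hkl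
      exact (hB kl.1 kl.2 j hj).trans_eq (zero_add B).symm
  calc ∑ w, ‖∑ k, ψ (f k w)‖ ^ (2 * ν)
      = ‖((∑ w, ‖∑ k, ψ (f k w)‖ ^ (2 * ν) : ℝ) : ℂ)‖ := by
        rw [Complex.norm_real, Real.norm_of_nonneg (by positivity)]
    _ ≤ ∑ kl : (Fin ν → κ) × (Fin ν → κ),
        ((if ∀ j, ∃ b, kl.1 b = kl.2 j then (Fintype.card W : ℝ) else 0) + B) :=
      hexpand ▸ (norm_sum_le _ _).trans (Finset.sum_le_sum fun kl _ => hterm kl)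
    _ = ((Finset.univ.filter fun kl : (Fin ν → κ) × (Fin ν → κ) =>
          ∀ j, ∃ b, kl.1 b = kl.2 j).card : ℝ) * Fintype.card W +
        (Fintype.card κ : ℝ) ^ (2 * ν) * B := by
      rw [Finset.sum_add_distrib, ← Finset.sum_filter, Finset.sum_const, Finset.sum_const,
        nsmul_eq_mul, nsmul_eq_mul]
      simp [two_mul, pow_add]
    _ ≤ _ := by
      gcongr
      exact_mod_cast card_filter_forall_exists_eq_le (κ := κ) ν

end Moments

lemma norm_sum_range_sub_sum_range_add_le {E : Type*} [SeminormedAddCommGroup E] {g : ℕ → E}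
    (hg : ∀ n, ‖g n‖ ≤ 1) (N k : ℕ) :
    ‖∑ n ∈ Finset.range N, g n - ∑ n ∈ Finset.range N, g (n + k)‖ ≤ 2 * min k N := by
  have hnorm : ∀ a M, ‖∑ n ∈ Finset.range M, g (a + n)‖ ≤ M := fun a M =>
    (norm_sum_le_of_le _ fun n _ => hg (a + n)).trans_eq (by simp)
  have hhead := Finset.sum_range_add g k N
  have htail := Finset.sum_range_add g N k
  rw [Nat.add_comm k N, htail] at hhead
  simp only [Nat.add_comm _ k]
  rcases le_total k N with hkN | hNk
  · have hdiff : ∑ n ∈ Finset.range N, g n - ∑ n ∈ Finset.range N, g (k + n) =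
        ∑ n ∈ Finset.range k, g (0 + n) - ∑ n ∈ Finset.range k, g (N + n) := by
      simp only [zero_add, sub_eq_sub_iff_add_eq_add]
      rw [hhead]
    rw [hdiff, min_eq_left hkN, two_mul]
    exact norm_sub_le_of_le (hnorm 0 k) (hnorm N k)
  · rw [min_eq_right hNk, two_mul]
    exact norm_sub_le_of_le (by simpa using hnorm 0 N) (hnorm k N)

lemma mul_norm_sum_range_le {E : Type*} [NormedAddCommGroup E] [NormedSpace ℝ E] {g : ℕ → E}
    (hg : ∀ n, ‖g n‖ ≤ 1) (N K : ℕ) :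
    K * ‖∑ n ∈ Finset.range N, g n‖ ≤
      2 * K * min K N + ∑ n ∈ Finset.range N, ‖∑ k : Fin K, g (n + k)‖ := by
  have hsplit : K • ∑ n ∈ Finset.range N, g n =
      ∑ k : Fin K, (∑ n ∈ Finset.range N, g n - ∑ n ∈ Finset.range N, g (n + k)) +
        ∑ n ∈ Finset.range N, ∑ k : Fin K, g (n + k) := by
    rw [Finset.sum_sub_distrib, Finset.sum_comm (s := Finset.range N), sub_add_cancel]
    simp
  rw [← nsmul_eq_mul, ← RCLike.norm_nsmul ℝ, hsplit]
  refine norm_add_le_of_le ?_ (norm_sum_le _ _)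
  calc ‖∑ k : Fin K, (∑ n ∈ Finset.range N, g n - ∑ n ∈ Finset.range N, g (n + k))‖
      ≤ ∑ _k : Fin K, 2 * ((min K N : ℕ) : ℝ) := by
        refine norm_sum_le_of_le _ fun k _ =>
          (norm_sum_range_sub_sum_range_add_le hg N k).trans ?_
        gcongr
        exact k.is_le'
    _ = 2 * K * ((min K N : ℕ) : ℝ) := by
      rw [Finset.sum_const, Finset.card_univ, Fintype.card_fin, nsmul_eq_mul]
      ring

lemma pow_sum_comp_le_card_pow_mul_sum_pow {ι W : Type*} [Fintype W] {s : Finset ι} {u : ι → W}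
    (hu : Set.InjOn u s) {h : W → ℝ} (hh : ∀ w, 0 ≤ h w) (r : ℕ) :
    (∑ n ∈ s, h (u n)) ^ (r + 1) ≤ (s.card : ℝ) ^ r * ∑ w, h w ^ (r + 1) := by
  classical
  refine (pow_sum_le_card_mul_sum_pow (fun n _ => hh (u n)) r).trans ?_
  gcongr
  rw [← Finset.sum_image (f := fun w => h w ^ (r + 1)) hu]
  exact Finset.sum_le_sum_of_subset_of_nonneg (Finset.subset_univ _)
    fun w _ _ => pow_nonneg (hh w) _

section Rate

/-- The quantity `q ^ α * N ^ (-β)`, with `α = (m² + mν + m) / (2ν(m + ν))` and `β = 1 / (2ν)`,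
that bounds the normalised exponential sums over `N` points of an orbit in `𝔽_q ^ (m + 1)`. -/
noncomputable def discrepancyRate (m ν q N : ℕ) : ℝ :=
  (q : ℝ) ^ (((m : ℝ) ^ 2 + (m : ℝ) * (ν : ℝ) + (m : ℝ)) /
      (2 * (ν : ℝ) * ((m : ℝ) + (ν : ℝ)))) * (N : ℝ) ^ (-(1 : ℝ) / (2 * (ν : ℝ)))

variable {m ν q N : ℕ}

lemma discrepancyRate_nonneg (m ν q N : ℕ) : 0 ≤ discrepancyRate m ν q N := by
  unfold discrepancyRate
  positivity

lemma discrepancyRate_pow_mul (hν : 1 ≤ ν) (hN : 0 < N) {x : ℝ} (hx0 : 0 ≤ x)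
    (hx : x ^ (m + ν) = q) :
    discrepancyRate m ν q N ^ (2 * ν) * N = x ^ (m ^ 2 + m * ν + m) := by
  have hN' : (0 : ℝ) < N := Nat.cast_pos.mpr hN
  have hα : ((m + ν : ℕ) : ℝ) * (((m : ℝ) ^ 2 + m * ν + m) / (2 * ν * (m + ν)) * (2 * ν : ℕ)) =
      ((m ^ 2 + m * ν + m : ℕ) : ℝ) := by
    push_cast
    field_simp
  have hβ : -(1 : ℝ) / (2 * ν) * ((2 * ν : ℕ) : ℝ) = -1 := by
    push_cast
    field_simp
  rw [discrepancyRate, mul_pow, ← Real.rpow_mul_natCast (by positivity),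
    ← Real.rpow_mul_natCast hN'.le, hβ, Real.rpow_neg_one, mul_assoc, inv_mul_cancel₀ hN'.ne',
    mul_one, ← hx, ← Real.rpow_natCast_mul hx0, hα, Real.rpow_natCast]

lemma min_le_mul_discrepancyRate (hm : 1 ≤ m) (hν : 1 ≤ ν) (hN : 0 < N) {x : ℝ} (hx1 : 1 ≤ x)
    (hx : x ^ (m + ν) = q) {K : ℕ} (hK : (K : ℝ) ≤ x) :
    ((min K N : ℕ) : ℝ) ≤ N * discrepancyRate m ν q N := by
  have hrate := discrepancyRate_nonneg m ν q N
  obtain ⟨r, hr⟩ : ∃ r, 2 * ν = r + 1 := ⟨2 * ν - 1, by omega⟩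
  have hxpow : x ≤ x ^ (m ^ 2 + m * ν + m) := le_self_pow₀ hx1 (by omega)
  refine le_of_pow_le_pow_left₀ (n := 2 * ν) (by omega) (by positivity) ?_
  calc ((min K N : ℕ) : ℝ) ^ (2 * ν)
      = ((min K N : ℕ) : ℝ) ^ r * (min K N : ℕ) := by rw [hr, pow_succ]
    _ ≤ (N : ℝ) ^ r * K := by
      gcongr
      exacts [min_le_right K N, min_le_left K N]
    _ ≤ (N : ℝ) ^ r * x ^ (m ^ 2 + m * ν + m) := by gcongr; exact hK.trans hxpow
    _ = (N : ℝ) ^ r * (discrepancyRate m ν q N ^ (2 * ν) * N) := by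
      rw [discrepancyRate_pow_mul hν hN (by positivity) hx]
    _ = (N * discrepancyRate m ν q N) ^ (2 * ν) := by
      rw [mul_pow, hr, pow_succ (N : ℝ)]
      ring

lemma le_mul_discrepancyRate_of_pow_le (hν : 1 ≤ ν) (hN : 0 < N) {x K A Y : ℝ} (hx0 : 0 ≤ x)
    (hx : x ^ (m + ν) = q) (hK : x ≤ 2 * K) (hA : 1 ≤ A)
    (hY : Y ^ (2 * ν) ≤ (N : ℝ) ^ (2 * ν - 1) * (A * K ^ ν * (q : ℝ) ^ (m + 1))) :
    Y ≤ 2 ^ ν * A * K * (N * discrepancyRate m ν q N) := by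
  set D := discrepancyRate m ν q N
  have hD : 0 ≤ D := discrepancyRate_nonneg m ν q N
  have hK0 : 0 ≤ K := by linarith
  have hDx : D ^ (2 * ν) * N * x ^ ν = (q : ℝ) ^ (m + 1) := by
    rw [discrepancyRate_pow_mul hν hN hx0 hx, ← hx]
    ring
  have hone : 1 ≤ 2 ^ ν * A := one_le_mul_of_one_le_of_one_le (one_le_pow₀ one_le_two) hA
  refine le_of_pow_le_pow_left₀ (n := 2 * ν) (by omega) (by positivity) ?_
  calc Y ^ (2 * ν)
      ≤ (N : ℝ) ^ (2 * ν - 1) * (A * K ^ ν * (D ^ (2 * ν) * N * x ^ ν)) := hDx ▸ hY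
    _ ≤ (N : ℝ) ^ (2 * ν - 1) * (A * K ^ ν * (D ^ (2 * ν) * N * (2 * K) ^ ν)) := by gcongr
    _ = (2 ^ ν * A) * ((N : ℝ) ^ (2 * ν - 1) * N) * (D * K) ^ (2 * ν) := by ring
    _ = (2 ^ ν * A) * (N : ℝ) ^ (2 * ν) * (D * K) ^ (2 * ν) := by
      rw [← pow_succ, Nat.sub_add_cancel (by omega)]
    _ ≤ (2 ^ ν * A) ^ (2 * ν) * (N : ℝ) ^ (2 * ν) * (D * K) ^ (2 * ν) := by
      gcongr
      exact le_self_pow₀ hone (by omega)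
    _ = (2 ^ ν * A * K * (N * D)) ^ (2 * ν) := by ring

lemma one_le_discrepancyRate_mul (hν : 1 ≤ ν) (hN : 0 < N) (hNq : N ≤ q ^ (m + 1)) :
    1 ≤ discrepancyRate m ν q N * q := by
  have hq : (1 : ℝ) ≤ q := by
    exact_mod_cast Nat.one_le_iff_ne_zero.mpr (by rintro rfl; simp at hNq; omega)
  set x : ℝ := (q : ℝ) ^ ((m + ν : ℕ) : ℝ)⁻¹
  have hx : x ^ (m + ν) = q := Real.rpow_inv_natCast_pow (by positivity) (by omega)
  have hx1 : 1 ≤ x := Real.one_le_rpow hq (by positivity)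
  have hD := discrepancyRate_nonneg m ν q N
  have hN' : (0 : ℝ) < N := Nat.cast_pos.mpr hN
  refine (one_le_pow_iff_of_nonneg (n := 2 * ν) (by positivity) (by omega)).mp ?_
  refine le_of_mul_le_mul_right ?_ hN'
  calc 1 * (N : ℝ) ≤ (q : ℝ) ^ (m + 1) := by rw [one_mul]; exact_mod_cast hNq
    _ = x ^ (m ^ 2 + m * ν + m) * x ^ ν := by rw [← hx]; ring
    _ ≤ x ^ (m ^ 2 + m * ν + m) * (x ^ (m + ν)) ^ (2 * ν) := by
      rw [← pow_mul]
      gcongr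
      nlinarith
    _ = (discrepancyRate m ν q N * q) ^ (2 * ν) * N := by
      rw [← discrepancyRate_pow_mul hν hN (by positivity) hx, hx]
      ring

end Rate

lemma exists_apply_ne_zero_and_forall_lt_eq_zero {ι M : Type*} [LinearOrder ι] [WellFoundedLT ι]
    [Zero M] {a : ι → M} (ha : a ≠ 0) : ∃ i, a i ≠ 0 ∧ ∀ j < i, a j = 0 := by
  obtain ⟨i, hi, hmin⟩ := WellFounded.has_min wellFounded_lt {i | a i ≠ 0} (Function.ne_iff.mp ha)
  exact ⟨i, hi, fun j hj => not_not.mp fun hne => hmin j hne hj⟩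

section OrbitSums

variable {𝔽 : Type*} [Field 𝔽] {m d ν p : ℕ} [CharP 𝔽 p]
  {F G : Fin (m + 1) → MvPolynomial (Fin (m + 1)) 𝔽} {a : Fin m → 𝔽}

namespace IsLinkedTriangular

-- Take the least `i` with `a i ≠ 0`. The coefficient of `X i` is then a nontrivial combination of
-- the linearly independent `iterCoeff`: `l j` occurs in it, with multiplicity at most `ν < p`.
lemma exists_iterForm_sub_eq_X_mul_add (h : IsLinkedTriangular F G)
    (hd : ∀ i, (F i).totalDegree ≤ d) (ha : a ≠ 0) (hν : ν < p) {K : ℕ} {k l : Fin ν → Fin K}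
    {j : Fin ν} (hj : l j ∉ Set.range k) :
    ∃ i, ∃ L ∈ supported 𝔽 {i}ᶜ, L ≠ 0 ∧ L.totalDegree ≤ ((d + 1) * K) ^ m ∧
      ∑ b, iterForm F a (k b) - ∑ b, iterForm F a (l b) - X i * L ∈ supported 𝔽 {i}ᶜ := by
  obtain ⟨i, hi, hmin⟩ := exists_apply_ne_zero_and_forall_lt_eq_zero ha
  set c : ℕ → MvPolynomial (Fin (m + 1)) 𝔽 := fun k => iterCoeff F G k i.castSucc
  have hIoi : supported 𝔽 (Set.Ioi i.castSucc) ≤ supported 𝔽 {i.castSucc}ᶜ :=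
    supported_mono fun j hj => (Set.mem_Ioi.mp hj).ne'
  have hc : ∀ k, c k ∈ supported 𝔽 {i.castSucc}ᶜ := fun k =>
    hIoi ((h.iterate k).coeff_mem_supported _)
  have hsum : ∀ k : Fin ν → Fin K, (∑ b, c (k b)).totalDegree ≤ ((d + 1) * K) ^ m := fun k =>
    totalDegree_finsetSum_le fun b _ => h.totalDegree_iterCoeff_le hd (k b).isLt _
  refine ⟨i.castSucc, C (a i) * (∑ b, c (k b) - ∑ b, c (l b)), ?_, ?_, ?_, ?_⟩
  · exact mul_mem ((supported 𝔽 _).algebraMap_mem (a i))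
      (sub_mem (sum_mem fun b _ => hc _) (sum_mem fun b _ => hc _))
  · exact mul_ne_zero (C_ne_zero.mpr hi) <| sub_ne_zero.mpr <|
      sum_comp_ne_sum_comp_of_notMem_range
        ((h.linearIndependent_iterCoeff i).comp _ Fin.val_injective) (by simpa using hν) hj
  · refine (totalDegree_mul _ _).trans ?_
    rw [totalDegree_C, zero_add]
    exact (totalDegree_sub _ _).trans (max_le (hsum k) (hsum l))
  · have hsplit : ∑ b, iterForm F a (k b) - ∑ b, iterForm F a (l b) -
        X i.castSucc * (C (a i) * (∑ b, c (k b) - ∑ b, c (l b))) =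
        ∑ b, (iterForm F a (k b) - X i.castSucc * (C (a i) * c (k b))) -
          ∑ b, (iterForm F a (l b) - X i.castSucc * (C (a i) * c (l b))) := by
      simp only [Finset.sum_sub_distrib, ← Finset.mul_sum]
      ring
    rw [hsplit]
    exact sub_mem (sum_mem fun b _ => hIoi (h.iterForm_sub_mem_supported hmin _))
      (sum_mem fun b _ => hIoi (h.iterForm_sub_mem_supported hmin _))

variable [Fintype 𝔽] {ψ : AddChar 𝔽 ℂ}

lemma sum_norm_sum_addChar_iterForm_pow_le (h : IsLinkedTriangular F G)
    (hd : ∀ i, (F i).totalDegree ≤ d) (hψ : ψ.IsPrimitive) (ha : a ≠ 0) (hν : ν < p) (K : ℕ) :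
    ∑ w, ‖∑ k : Fin K, ψ (eval w (iterForm F a k))‖ ^ (2 * ν) ≤
      (ν : ℝ) ^ ν * (K : ℝ) ^ ν * (Fintype.card 𝔽 : ℝ) ^ (m + 1) +
        (K : ℝ) ^ (2 * ν) * (((d + 1) * K : ℝ) ^ m * (Fintype.card 𝔽 : ℝ) ^ m) := by
  have hpair : ∀ (k l : Fin ν → Fin K) (j : Fin ν), l j ∉ Set.range k →
      ‖∑ w, ψ (∑ b, eval w (iterForm F a (k b)) - ∑ b, eval w (iterForm F a (l b)))‖ ≤
        ((d + 1) * K : ℝ) ^ m * (Fintype.card 𝔽 : ℝ) ^ m := by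
    intro k l j hj
    obtain ⟨i, L, hL, hL0, hdeg, hP⟩ := h.exists_iterForm_sub_eq_X_mul_add hd ha hν hj
    simp only [← map_sum, ← map_sub]
    refine (norm_sum_addChar_eval_le hψ hL0 hL hP).trans ?_
    gcongr
    exact_mod_cast hdeg
  refine (sum_norm_sum_addChar_pow_le ψ (fun (k : Fin K) w => eval w (iterForm F a k)) ν
    (by positivity) hpair).trans_eq ?_
  simp

lemma sum_norm_sum_addChar_orbit_pow_le (h : IsLinkedTriangular F G)
    (hd : ∀ i, (F i).totalDegree ≤ d) (hψ : ψ.IsPrimitive) (ha : a ≠ 0) (hν1 : 1 ≤ ν)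
    (hν : ν < p) {u : ℕ → Fin (m + 1) → 𝔽} (hu : ∀ n i, u (n + 1) i = eval (u n) (F i)) {N : ℕ}
    (hinj : Set.InjOn u (Set.Iio N)) {K : ℕ} (hK : K ^ (m + ν) ≤ Fintype.card 𝔽) :
    (∑ n ∈ Finset.range N, ‖∑ k : Fin K, ψ (∑ i, a i * u (n + k) i.castSucc)‖) ^ (2 * ν) ≤
      (N : ℝ) ^ (2 * ν - 1) *
        (((ν : ℝ) ^ ν + (d + 1) ^ m) * K ^ ν * (Fintype.card 𝔽 : ℝ) ^ (m + 1)) := by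
  set q := Fintype.card 𝔽
  have hholder := pow_sum_comp_le_card_pow_mul_sum_pow (s := Finset.range N) (u := u)
    (by rwa [Finset.coe_range])
    (h := fun w => ‖∑ k : Fin K, ψ (eval w (iterForm F a k))‖) (fun w => norm_nonneg _) (2 * ν - 1)
  simp only [eval_iterForm hu, Finset.card_range, Nat.sub_add_cancel (show 1 ≤ 2 * ν by omega)]
    at hholder
  refine hholder.trans (mul_le_mul_of_nonneg_left ?_ (by positivity))
  calc ∑ w, ‖∑ k : Fin K, ψ (eval w (iterForm F a k))‖ ^ (2 * ν)
      ≤ (ν : ℝ) ^ ν * (K : ℝ) ^ ν * (q : ℝ) ^ (m + 1) +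
        (K : ℝ) ^ (2 * ν) * (((d + 1) * K : ℝ) ^ m * (q : ℝ) ^ m) :=
      h.sum_norm_sum_addChar_iterForm_pow_le hd hψ ha hν K
    _ = (ν : ℝ) ^ ν * K ^ ν * (q : ℝ) ^ (m + 1) +
        (d + 1) ^ m * K ^ ν * (q : ℝ) ^ m * (K : ℝ) ^ (m + ν) := by
      rw [mul_pow]
      ring
    _ ≤ (ν : ℝ) ^ ν * K ^ ν * (q : ℝ) ^ (m + 1) + (d + 1) ^ m * K ^ ν * (q : ℝ) ^ m * q := by
      gcongr
      exact_mod_cast hK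
    _ = ((ν : ℝ) ^ ν + (d + 1) ^ m) * K ^ ν * (q : ℝ) ^ (m + 1) := by ring

theorem norm_sum_addChar_orbit_le (h : IsLinkedTriangular F G)
    (hd : ∀ i, (F i).totalDegree ≤ d) (hψ : ψ.IsPrimitive) (ha : a ≠ 0) (hν1 : 1 ≤ ν)
    (hν : ν < p) {u : ℕ → Fin (m + 1) → 𝔽} (hu : ∀ n i, u (n + 1) i = eval (u n) (F i)) {N : ℕ}
    (hN : 0 < N) (hinj : Set.InjOn u (Set.Iio N)) :
    ‖∑ n ∈ Finset.range N, ψ (∑ i, a i * u n i.castSucc)‖ ≤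
      (2 + 2 ^ ν * ((ν : ℝ) ^ ν + (d + 1) ^ m)) *
        (N * discrepancyRate m ν (Fintype.card 𝔽) N) := by
  set q := Fintype.card 𝔽
  set D := N * discrepancyRate m ν q N
  set A : ℝ := (ν : ℝ) ^ ν + (d + 1) ^ m
  have hA : 1 ≤ A :=
    (one_le_pow₀ (Nat.one_le_cast.mpr hν1)).trans (le_add_of_nonneg_right (by positivity))
  have hm : 1 ≤ m := (Function.ne_iff.mp ha).choose.pos
  have hq : (1 : ℝ) ≤ q := Nat.one_le_cast.mpr Fintype.card_pos
  set x : ℝ := (q : ℝ) ^ ((m + ν : ℕ) : ℝ)⁻¹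
  have hx : x ^ (m + ν) = q := Real.rpow_inv_natCast_pow (by positivity) (by omega)
  have hx1 : 1 ≤ x := Real.one_le_rpow hq (by positivity)
  set K := ⌊x⌋₊
  have hKx : (K : ℝ) ≤ x := Nat.floor_le (by positivity)
  have hK1 : (1 : ℝ) ≤ K := Nat.one_le_cast.mpr (Nat.one_le_floor_iff x |>.mpr hx1)
  have hxK : x ≤ 2 * K := by linarith [Nat.lt_floor_add_one x]
  have hKq : K ^ (m + ν) ≤ q := by
    have hpow : (K : ℝ) ^ (m + ν) ≤ q := hx ▸ pow_le_pow_left₀ (by positivity) hKx _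
    exact_mod_cast hpow
  have hshift := mul_norm_sum_range_le (g := fun n => ψ (∑ i, a i * u n i.castSucc))
    (fun n => (ψ.norm_apply _).le) N K
  refine le_of_mul_le_mul_left (hshift.trans ?_) (zero_lt_one.trans_le hK1)
  calc _ ≤ 2 * K * D + 2 ^ ν * A * K * D :=
        add_le_add
          (mul_le_mul_of_nonneg_left (min_le_mul_discrepancyRate hm hν1 hN hx1 hx hKx)
            (by positivity))
          (le_mul_discrepancyRate_of_pow_le hν1 hN (by positivity) hx hxK hA
            (h.sum_norm_sum_addChar_orbit_pow_le hd hψ ha hν1 hν hu hinj hKq))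
    _ = K * ((2 + 2 ^ ν * A) * D) := by ring

end IsLinkedTriangular

end OrbitSums

section ZModFourier

open scoped ZMod

variable {q : ℕ} [NeZero q] {A B : ℕ} {t : ZMod q}

lemma four_mul_abs_valMinAbs_div_le_norm_stdAddChar_sub_one (t : ZMod q) :
    4 * |(t.valMinAbs : ℝ)| / q ≤ ‖ZMod.stdAddChar t - 1‖ := by
  have hq : (0 : ℝ) < q := Nat.cast_pos.mpr (NeZero.pos q)
  set θ : ℝ := 2 * Real.pi * t.valMinAbs / q
  have hexp : ZMod.stdAddChar t = Complex.exp (Complex.I * θ) := by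
    conv_lhs => rw [← ZMod.coe_valMinAbs t, ZMod.stdAddChar_coe]
    congr 1
    simp only [θ]
    push_cast
    ring
  have habs : |θ / 2| = Real.pi / q * |(t.valMinAbs : ℝ)| := by
    rw [show θ / 2 = Real.pi / q * t.valMinAbs by ring, abs_mul, abs_of_pos (by positivity)]
  have hhalf : |(t.valMinAbs : ℝ)| ≤ q / 2 := by
    obtain ⟨hlo, hhi⟩ := ZMod.valMinAbs_mem_Ioc t
    have hlo' : -(q : ℝ) < t.valMinAbs * 2 := mod_cast hlo
    have hhi' : (t.valMinAbs * 2 : ℝ) ≤ q := mod_cast hhi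
    exact abs_le.mpr ⟨by linarith, by linarith⟩
  have hjordan : 2 / Real.pi * |θ / 2| ≤ |Real.sin (θ / 2)| := by
    refine Real.mul_abs_le_abs_sin ?_
    calc |θ / 2| ≤ Real.pi / q * (q / 2) := by rw [habs]; gcongr
      _ = Real.pi / 2 := by field_simp
  calc 4 * |(t.valMinAbs : ℝ)| / q = 2 * (2 / Real.pi * |θ / 2|) := by
        rw [habs]
        field_simp
        ring
    _ ≤ 2 * |Real.sin (θ / 2)| := by gcongr
    _ = ‖ZMod.stdAddChar t - 1‖ := by
      rw [hexp, Complex.norm_exp_I_mul_ofReal_sub_one, norm_mul, Real.norm_eq_abs,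
        Real.norm_eq_abs, abs_two]

lemma dft_ite_val_mem_Ico (hB : B ≤ q) (t : ZMod q) :
    𝓕 (fun y : ZMod q => if y.val ∈ Finset.Ico A B then (1 : ℂ) else 0) t =
      ∑ n ∈ Finset.Ico A B, ZMod.stdAddChar (-t) ^ n := by
  simp only [ZMod.dft_apply, smul_eq_mul, mul_ite, mul_one, mul_zero, ← Finset.sum_filter]
  refine Finset.sum_nbij' ZMod.val (fun n => (n : ZMod q)) ?_ ?_ ?_ ?_ ?_
  · exact fun y hy => (Finset.mem_filter.mp hy).2
  · intro n hn
    have hnq : n < q := (Finset.mem_Ico.mp hn).2.trans_le hB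
    rw [Finset.mem_filter, ZMod.val_cast_of_lt hnq]
    exact ⟨Finset.mem_univ _, hn⟩
  · exact fun y _ => ZMod.natCast_zmod_val y
  · exact fun n hn => ZMod.val_cast_of_lt ((Finset.mem_Ico.mp hn).2.trans_le hB)
  · intro y _
    rw [← AddChar.map_nsmul_eq_pow, nsmul_eq_mul, ZMod.natCast_zmod_val, mul_neg]

lemma norm_dft_ite_val_mem_Ico_le (hAB : A ≤ B) (hB : B ≤ q) (ht : t ≠ 0) :
    ‖𝓕 (fun y : ZMod q => if y.val ∈ Finset.Ico A B then (1 : ℂ) else 0) t‖ ≤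
      q / 2 * ((t.val : ℝ)⁻¹ + ((-t).val : ℝ)⁻¹) := by
  have hq : (0 : ℝ) < q := Nat.cast_pos.mpr (NeZero.pos q)
  set z : ℂ := ZMod.stdAddChar (-t)
  set k := min t.val (-t).val
  have hneg : (-t).val = q - t.val := by rw [ZMod.neg_val, if_neg ht]
  have hk : |((-t).valMinAbs : ℝ)| = k := by
    have hmin : t.valMinAbs.natAbs = k := by
      rw [ZMod.valMinAbs_natAbs_eq_min, ← hneg]
    rw [← Int.cast_abs, Int.abs_eq_natAbs, ZMod.natAbs_valMinAbs_neg, Int.cast_natCast, hmin]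
  have hk0 : (0 : ℝ) < k := Nat.cast_pos.mpr <|
    lt_min (ZMod.val_pos.mpr ht) (hneg ▸ Nat.sub_pos_of_lt t.val_lt)
  have hz : 4 * (k : ℝ) / q ≤ ‖z - 1‖ :=
    hk ▸ four_mul_abs_valMinAbs_div_le_norm_stdAddChar_sub_one (-t)
  have hgeom : ‖∑ n ∈ Finset.Ico A B, z ^ n‖ * ‖z - 1‖ ≤ 2 := by
    rw [← norm_mul, geom_sum_Ico_mul z hAB]
    refine (norm_sub_le _ _).trans_eq ?_
    rw [norm_pow, norm_pow, AddChar.norm_apply]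
    norm_num
  calc _ = ‖∑ n ∈ Finset.Ico A B, z ^ n‖ := by rw [dft_ite_val_mem_Ico hB]
    _ ≤ q / 2 * (k : ℝ)⁻¹ := by
      rw [← div_eq_mul_inv, div_div, le_div_iff₀ (by positivity)]
      calc _ = q / 2 * (‖∑ n ∈ Finset.Ico A B, z ^ n‖ * (4 * k / q)) := by field_simp; ring
        _ ≤ q / 2 * 2 := by gcongr; exact (by gcongr : _ ≤ _).trans hgeom
        _ = q := by ring
    _ ≤ _ := by
      gcongr
      rcases min_choice t.val (-t).val with hmin | hmin <;> simp only [k, hmin]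
      exacts [le_add_of_nonneg_right (by positivity), le_add_of_nonneg_left (by positivity)]

lemma sum_inv_val_le (q : ℕ) [NeZero q] :
    ∑ t : ZMod q, (t.val : ℝ)⁻¹ ≤ 1 + Real.log q := by
  obtain ⟨n, rfl⟩ := Nat.exists_eq_add_one_of_ne_zero (NeZero.ne q)
  calc ∑ t : ZMod (n + 1), (t.val : ℝ)⁻¹ = ∑ k ∈ Finset.range (n + 1), (k : ℝ)⁻¹ :=
        Fin.sum_univ_eq_sum_range (fun k : ℕ => (k : ℝ)⁻¹) (n + 1)
    _ = (harmonic n : ℝ) := by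
      rw [Finset.sum_range_succ', harmonic]
      push_cast
      simp
    _ ≤ 1 + Real.log n := harmonic_le_one_add_log n
    _ ≤ 1 + Real.log (n + 1 : ℕ) := by
      rcases n.eq_zero_or_pos with rfl | hn
      · simp
      · gcongr
        exact n.le_succ

lemma sum_norm_dft_ite_val_mem_Ico_le (hAB : A ≤ B) (hB : B ≤ q) :
    ∑ t, ‖𝓕 (fun y : ZMod q => if y.val ∈ Finset.Ico A B then (1 : ℂ) else 0) t‖ ≤
      q * (2 + Real.log q) := by
  have hsum := sum_inv_val_le q
  have hneg : ∑ t : ZMod q, ((-t).val : ℝ)⁻¹ = ∑ t : ZMod q, (t.val : ℝ)⁻¹ :=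
    Equiv.sum_comp (Equiv.neg (ZMod q)) fun t => (t.val : ℝ)⁻¹
  have hterm : ∀ t : ZMod q,
      ‖𝓕 (fun y : ZMod q => if y.val ∈ Finset.Ico A B then (1 : ℂ) else 0) t‖ ≤
        (if t = 0 then (q : ℝ) else 0) + q / 2 * ((t.val : ℝ)⁻¹ + ((-t).val : ℝ)⁻¹) := by
    intro t
    rcases eq_or_ne t 0 with rfl | ht
    · rw [dft_ite_val_mem_Ico hB]
      simp only [neg_zero, AddChar.map_zero_eq_one, one_pow, Finset.sum_const, Nat.card_Ico,
        nsmul_eq_mul, mul_one, Complex.norm_natCast, if_true, ZMod.val_zero, Nat.cast_zero,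
        inv_zero, add_zero, mul_zero]
      exact Nat.cast_le.mpr ((Nat.sub_le B A).trans hB)
    · rw [if_neg ht, zero_add]
      exact norm_dft_ite_val_mem_Ico_le hAB hB ht
  calc _ ≤ ∑ t : ZMod q,
        ((if t = 0 then (q : ℝ) else 0) + q / 2 * ((t.val : ℝ)⁻¹ + ((-t).val : ℝ)⁻¹)) :=
        Finset.sum_le_sum fun t _ => hterm t
    _ = q + q * ∑ t : ZMod q, (t.val : ℝ)⁻¹ := by
      rw [Finset.sum_add_distrib, ← Finset.mul_sum, Finset.sum_add_distrib, hneg,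
        Fintype.sum_ite_eq']
      ring
    _ ≤ q + q * (1 + Real.log q) := by gcongr
    _ = q * (2 + Real.log q) := by ring

end ZModFourier

section Equidistribution

open scoped ZMod

variable {q : ℕ} [NeZero q]

lemma sum_prod_eq_sum_dft_mul_sum_stdAddChar {ι κ : Type*} [Fintype κ] [DecidableEq κ]
    (I : Finset ι) (x : ι → κ → ZMod q) (Φ : κ → ZMod q → ℂ) :
    ∑ n ∈ I, ∏ j, Φ j (x n j) =
      ∑ a : κ → ZMod q, (∏ j, 𝓕 (Φ j) (a j) / q) * ∑ n ∈ I, ZMod.stdAddChar (∑ j, a j * x n j) := by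
  have hinv : ∀ j y, Φ j y = ∑ t, 𝓕 (Φ j) t / q * ZMod.stdAddChar (t * y) := fun j y => by
    conv_lhs => rw [← ZMod.dft.symm_apply_apply (Φ j), ZMod.invDFT_apply]
    simp only [smul_eq_mul, Finset.mul_sum]
    exact Finset.sum_congr rfl fun t _ => by ring
  simp only [Finset.mul_sum]
  rw [Finset.sum_comm]
  refine Finset.sum_congr rfl fun n _ => ?_
  simp only [hinv, Finset.prod_univ_sum, Fintype.piFinset_univ, Finset.prod_mul_distrib,
    addChar_sum_eq_prod]

lemma norm_sum_prod_sub_card_mul_prod_le {ι κ : Type*} [Fintype κ] {I : Finset ι}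
    {x : ι → κ → ZMod q} {M : ℝ} (hM0 : 0 ≤ M)
    (hM : ∀ a : κ → ZMod q, a ≠ 0 → ‖∑ n ∈ I, ZMod.stdAddChar (∑ j, a j * x n j)‖ ≤ M)
    (Φ : κ → ZMod q → ℂ) :
    ‖∑ n ∈ I, ∏ j, Φ j (x n j) - I.card * ∏ j, (∑ y, Φ j y) / q‖ ≤
      M * ∏ j, (∑ t, ‖𝓕 (Φ j) t‖) / q := by
  classical
  have hzero : (∏ j, 𝓕 (Φ j) ((0 : κ → ZMod q) j) / q) *
      ∑ n ∈ I, ZMod.stdAddChar (∑ j, (0 : κ → ZMod q) j * x n j) =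
        I.card * ∏ j, (∑ y, Φ j y) / q := by
    simp only [Pi.zero_apply, ZMod.dft_apply_zero, zero_mul, Finset.sum_const_zero,
      AddChar.map_zero_eq_one, Finset.sum_const, nsmul_eq_mul, mul_one]
    exact mul_comm _ _
  rw [sum_prod_eq_sum_dft_mul_sum_stdAddChar, ← Finset.add_sum_erase _ _ (Finset.mem_univ 0),
    hzero, add_sub_cancel_left]
  calc _ ≤ ∑ a ∈ Finset.univ.erase (0 : κ → ZMod q), (∏ j, ‖𝓕 (Φ j) (a j)‖ / q) * M := by
        refine norm_sum_le_of_le _ fun a ha => ?_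
        simp only [norm_mul, norm_prod, norm_div, Complex.norm_natCast]
        gcongr
        exact hM a (Finset.ne_of_mem_erase ha)
    _ ≤ ∑ a : κ → ZMod q, (∏ j, ‖𝓕 (Φ j) (a j)‖ / q) * M :=
      Finset.sum_le_sum_of_subset_of_nonneg (Finset.erase_subset _ _) fun _ _ _ => by positivity
    _ = M * ∏ j, (∑ t, ‖𝓕 (Φ j) t‖) / q := by
      simp only [Finset.sum_div]
      rw [← Finset.sum_mul, Finset.prod_univ_sum, Fintype.piFinset_univ, mul_comm]

lemma abs_card_filter_val_mem_Ico_sub_le {ι κ : Type*} [Fintype κ] {I : Finset ι}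
    {x : ι → κ → ZMod q} {M : ℝ} (hM0 : 0 ≤ M)
    (hM : ∀ a : κ → ZMod q, a ≠ 0 → ‖∑ n ∈ I, ZMod.stdAddChar (∑ j, a j * x n j)‖ ≤ M)
    {A B : κ → ℕ} (hAB : ∀ j, A j ≤ B j) (hB : ∀ j, B j ≤ q) :
    |((I.filter fun n => ∀ j, (x n j).val ∈ Finset.Ico (A j) (B j)).card : ℝ) -
        I.card * ∏ j, ((B j : ℝ) - A j) / q| ≤ M * (2 + Real.log q) ^ Fintype.card κ := by
  have hq : (0 : ℝ) < q := Nat.cast_pos.mpr (NeZero.pos q)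
  set Φ : κ → ZMod q → ℂ := fun j y => if y.val ∈ Finset.Ico (A j) (B j) then 1 else 0
  have hcount : ∑ n ∈ I, ∏ j, Φ j (x n j) =
      (I.filter fun n => ∀ j, (x n j).val ∈ Finset.Ico (A j) (B j)).card := by
    simp only [Φ, Finset.prod_ite_zero, Finset.mem_univ, true_imp_iff, Finset.prod_const_one,
      Finset.sum_boole]
  have hmean : ∀ j, ∑ y, Φ j y = (B j : ℂ) - A j := fun j => by
    rw [← ZMod.dft_apply_zero, dft_ite_val_mem_Ico (hB j)]
    simp [hAB j]
  have hbound := norm_sum_prod_sub_card_mul_prod_le hM0 hM Φ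
  simp only [hcount, hmean] at hbound
  calc _ ≤ M * ∏ j, (∑ t, ‖𝓕 (Φ j) t‖) / q := by
        rw [← Real.norm_eq_abs, ← Complex.norm_real]
        simpa only [Complex.ofReal_sub, Complex.ofReal_mul, Complex.ofReal_prod,
          Complex.ofReal_div, Complex.ofReal_natCast] using hbound
    _ ≤ M * ∏ _j : κ, (2 + Real.log q) := by
      gcongr with j
      rw [div_le_iff₀' hq]
      exact sum_norm_dft_ite_val_mem_Ico_le (hAB j) (hB j)
    _ = _ := by rw [Finset.prod_const, Finset.card_univ]

lemma abs_prod_sub_prod_le {ι : Type*} {t : Finset ι} {y z : ι → ℝ} {δ : ℝ}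
    (hy : ∀ j ∈ t, y j ∈ Set.Icc 0 1) (hz : ∀ j ∈ t, z j ∈ Set.Icc 0 1)
    (h : ∀ j ∈ t, |y j - z j| ≤ δ) : |∏ j ∈ t, y j - ∏ j ∈ t, z j| ≤ t.card * δ := by
  classical
  induction t using Finset.induction_on with
  | empty => simp
  | insert a t ha ih =>
    simp only [Finset.forall_mem_insert] at hy hz h
    have hprod : |∏ j ∈ t, z j| ≤ 1 := by
      rw [abs_of_nonneg (Finset.prod_nonneg fun j hj => (hz.2 j hj).1)]
      exact Finset.prod_le_one (fun j hj => (hz.2 j hj).1) fun j hj => (hz.2 j hj).2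
    have hδ : 0 ≤ δ := (abs_nonneg _).trans h.1
    have hya : |y a| ≤ 1 := (abs_of_nonneg hy.1.1).trans_le hy.1.2
    rw [Finset.prod_insert ha, Finset.prod_insert ha, Finset.card_insert_of_notMem ha]
    calc |y a * ∏ j ∈ t, y j - z a * ∏ j ∈ t, z j|
        = |y a * (∏ j ∈ t, y j - ∏ j ∈ t, z j) + (y a - z a) * ∏ j ∈ t, z j| := by ring_nf
      _ ≤ |y a| * |∏ j ∈ t, y j - ∏ j ∈ t, z j| + |y a - z a| * |∏ j ∈ t, z j| := by
        rw [← abs_mul, ← abs_mul]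
        exact abs_add_le _ _
      _ ≤ 1 * (t.card * δ) + δ * 1 := by
        gcongr
        exacts [ih hy.2 hz.2 h.2, h.1]
      _ = (t.card + 1 : ℕ) * δ := by
        push_cast
        ring

lemma abs_ceil_mul_sub_ceil_mul_div_sub_le {a b r : ℝ} (hr : 0 < r) (ha : 0 ≤ a) (hab : a ≤ b) :
    |((⌈b * r⌉₊ : ℝ) - ⌈a * r⌉₊) / r - (b - a)| ≤ 1 / r := by
  have ha1 : a * r ≤ ⌈a * r⌉₊ := Nat.le_ceil _
  have ha2 : (⌈a * r⌉₊ : ℝ) < a * r + 1 := Nat.ceil_lt_add_one (by positivity)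
  have hb1 : b * r ≤ ⌈b * r⌉₊ := Nat.le_ceil _
  have hb2 : (⌈b * r⌉₊ : ℝ) < b * r + 1 := Nat.ceil_lt_add_one (mul_nonneg (ha.trans hab) hr.le)
  rw [show ((⌈b * r⌉₊ : ℝ) - ⌈a * r⌉₊) / r - (b - a) =
      ((⌈b * r⌉₊ - b * r) - (⌈a * r⌉₊ - a * r)) / r by field_simp; ring, abs_div, abs_of_pos hr]
  gcongr
  exact abs_le.mpr ⟨by linarith, by linarith⟩

lemma abs_prod_ceil_mul_sub_prod_le {κ : Type*} [Fintype κ] {q : ℕ} (hq : 0 < q) {a b : κ → ℝ}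
    (hab : ∀ j, 0 ≤ a j ∧ a j ≤ b j ∧ b j ≤ 1) :
    |∏ j, ((⌈b j * q⌉₊ : ℝ) - ⌈a j * q⌉₊) / q - ∏ j, (b j - a j)| ≤ Fintype.card κ / q := by
  have hq' : (0 : ℝ) < q := Nat.cast_pos.mpr hq
  rw [div_eq_mul_one_div]
  refine abs_prod_sub_prod_le (fun j _ => ?_) (fun j _ => ?_) fun j _ => ?_ <;>
    obtain ⟨ha, hab, hb⟩ := hab j
  · have hceil : (⌈a j * q⌉₊ : ℝ) ≤ ⌈b j * q⌉₊ := mod_cast Nat.ceil_le_ceil (by gcongr)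
    have hceil_le : (⌈b j * q⌉₊ : ℝ) ≤ q :=
      mod_cast Nat.ceil_le.mpr (mul_le_of_le_one_left hq'.le hb)
    rw [Set.mem_Icc, div_le_one hq']
    exact ⟨div_nonneg (by linarith) hq'.le, by linarith [Nat.cast_nonneg (α := ℝ) ⌈a j * q⌉₊]⟩
  · exact ⟨by linarith, by linarith⟩
  · exact abs_ceil_mul_sub_ceil_mul_div_sub_le hq' ha hab

theorem discrepancy_le_of_norm_sum_stdAddChar_le {s N : ℕ} (hN : 0 < N) {x : ℕ → Fin s → ZMod q}
    {M : ℝ} (hM0 : 0 ≤ M) (hM : ∀ a : Fin s → ZMod q, a ≠ 0 →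
      ‖∑ n ∈ Finset.range N, ZMod.stdAddChar (∑ j, a j * x n j)‖ ≤ N * M) :
    discrepancy s N (fun n j => ((x n j).val : ℝ) / q) ≤ M * (2 + Real.log q) ^ s + s / q := by
  have hq : (0 : ℝ) < q := Nat.cast_pos.mpr (NeZero.pos q)
  have hN' : (0 : ℝ) < N := Nat.cast_pos.mpr hN
  refine Real.sSup_le ?_ (by positivity)
  rintro _ ⟨a, b, hab, rfl⟩
  have hlattice : ∀ n j, (a j ≤ ((x n j).val : ℝ) / q ∧ ((x n j).val : ℝ) / q < b j) ↔
      (x n j).val ∈ Finset.Ico ⌈a j * q⌉₊ ⌈b j * q⌉₊ := fun n j => by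
    rw [Finset.mem_Ico, Nat.ceil_le, Nat.lt_ceil, le_div_iff₀ hq, div_lt_iff₀ hq]
  have hcount := abs_card_filter_val_mem_Ico_sub_le (by positivity) hM
    (A := fun j => ⌈a j * q⌉₊) (B := fun j => ⌈b j * q⌉₊)
    (fun j => Nat.ceil_le_ceil (mul_le_mul_of_nonneg_right (hab j).2.1 hq.le))
    (fun j => Nat.ceil_le.mpr (mul_le_of_le_one_left hq.le (hab j).2.2))
  have hvolume := abs_prod_ceil_mul_sub_prod_le (NeZero.pos q) hab
  simp only [← hlattice, Finset.card_range, Fintype.card_fin] at hcount hvolume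
  refine (abs_sub_le _ _ _).trans (add_le_add ?_ hvolume)
  rw [div_sub' hN'.ne', abs_div, abs_of_pos hN', div_le_iff₀ hN']
  exact hcount.trans_eq (by ring)

end Equidistribution

lemma injOn_Iio_of_forall_period_le {α : Type*} {u : ℕ → α} {f : α → α}
    (hu : ∀ n, u (n + 1) = f (u n)) {τ : ℕ} (hτ : 0 < τ) (hper : u τ = u 0)
    (hmin : ∀ t, 0 < t → (∀ n, u (n + t) = u n) → τ ≤ t) : Set.InjOn u (Set.Iio τ) := by
  obtain ⟨x, rfl⟩ : ∃ x, u = fun n => f^[n] x := ⟨u 0, funext fun n => by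
    induction n with
    | zero => rfl
    | succ n ih => rw [hu, ih, Function.iterate_succ_apply']⟩
  have hle : τ ≤ Function.minimalPeriod f x :=
    hmin _ (Function.IsPeriodicPt.minimalPeriod_pos hτ hper) fun _ =>
      Function.iterate_add_minimalPeriod_eq
  exact Function.iterate_injOn_Iio_minimalPeriod.mono (Set.Iio_subset_Iio hle)

lemma le_card_of_injOn_Iio {α : Type*} [Fintype α] {u : ℕ → α} {N : ℕ}
    (hu : Set.InjOn u (Set.Iio N)) : N ≤ Fintype.card α := by
  simpa using Finset.card_le_card_of_injOn (s := Finset.range N) (t := Finset.univ) u (by simp)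
    (by simpa using hu)

section PrimeField

variable {m d ν p N : ℕ} [Fact p.Prime]
  {F G : Fin (m + 1) → MvPolynomial (Fin (m + 1)) (ZMod p)} {u : ℕ → Fin (m + 1) → ZMod p}

lemma one_le_discrepancyRate_mul_of_injOn (hν : 1 ≤ ν) (hN : 0 < N)
    (hinj : Set.InjOn u (Set.Iio N)) : 1 ≤ discrepancyRate m ν p N * p :=
  one_le_discrepancyRate_mul hν hN (by simpa [ZMod.card] using le_card_of_injOn_Iio hinj)

lemma IsLinkedTriangular.norm_sum_stdAddChar_orbit_le (h : IsLinkedTriangular F G)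
    (hd : ∀ i, (F i).totalDegree ≤ d) {a : Fin m → ZMod p} (ha : a ≠ 0) (hν : 1 ≤ ν)
    (hu : ∀ n i, u (n + 1) i = eval (u n) (F i)) (hN : 0 < N) (hinj : Set.InjOn u (Set.Iio N)) :
    ‖∑ n ∈ Finset.range N, ZMod.stdAddChar (∑ i, a i * u n i.castSucc)‖ ≤
      N * ((2 + 2 ^ ν * ((ν : ℝ) ^ ν + (d + 1) ^ m) + ν) * discrepancyRate m ν p N) := by
  have hrate := discrepancyRate_nonneg m ν p N
  rcases lt_or_ge ν p with hνp | hpν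
  · have hbound := h.norm_sum_addChar_orbit_le hd (ZMod.isPrimitive_stdAddChar p) ha hν hνp hu hN
      hinj
    rw [ZMod.card, mul_left_comm] at hbound
    refine hbound.trans ?_
    gcongr ?_ * (?_ * ?_)
    exact le_add_of_nonneg_right ν.cast_nonneg
  · calc ‖∑ n ∈ Finset.range N, ZMod.stdAddChar (∑ i, a i * u n i.castSucc)‖ ≤ N * 1 :=
        (norm_sum_le_of_le _ fun n _ => (AddChar.norm_apply _ _).le).trans_eq (by simp)
      _ ≤ N * (p * discrepancyRate m ν p N) := by
        gcongr
        exact (one_le_discrepancyRate_mul_of_injOn hν hN hinj).trans_eq (mul_comm _ _)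
      _ ≤ _ := by
        gcongr
        exact (Nat.cast_le.mpr hpν).trans (le_add_of_nonneg_left (by positivity))

end PrimeField

theorem stmt4_general (m d ν : ℕ) (hν : 1 ≤ ν) :
    ∃ c : ℝ, 0 < c ∧ ∀ p : ℕ, p.Prime →
      ∀ F G : Fin (m + 1) → MvPolynomial (Fin (m + 1)) (ZMod p),
        IsLinkedTriangular F G → (∀ i, (F i).totalDegree ≤ d) →
          ∀ u : ℕ → Fin (m + 1) → ZMod p, (∀ n i, u (n + 1) i = eval (u n) (F i)) →
            ∀ N : ℕ, 0 < N → Set.InjOn u (Set.Iio N) →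
              discrepancy m N (fun n j => ((u n j.castSucc).val : ℝ) / p) ≤
                c * discrepancyRate m ν p N * Real.log p ^ m := by
  set C : ℝ := 2 + 2 ^ ν * ((ν : ℝ) ^ ν + (d + 1) ^ m) + ν
  refine ⟨(C + m) * 4 ^ m, by positivity, fun p hp F G h hd u hu N hN hinj => ?_⟩
  have := Fact.mk hp
  have hp0 : (0 : ℝ) < p := Nat.cast_pos.mpr hp.pos
  have hlog : 2 ≤ 3 * Real.log p := by
    have hmono := Real.log_le_log two_pos (Nat.ofNat_le_cast.mpr hp.two_le)
    linarith [Real.log_two_gt_d9]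
  set D := discrepancyRate m ν p N
  have hD : 0 ≤ D := discrepancyRate_nonneg m ν p N
  have hpD : 1 / (p : ℝ) ≤ D :=
    (div_le_iff₀ hp0).mpr (one_le_discrepancyRate_mul_of_injOn hν hN hinj)
  calc discrepancy m N (fun n j => ((u n j.castSucc).val : ℝ) / p)
      ≤ C * D * (2 + Real.log p) ^ m + m / p :=
        discrepancy_le_of_norm_sum_stdAddChar_le (x := fun n j => u n j.castSucc) hN (by positivity)
          fun a ha => h.norm_sum_stdAddChar_orbit_le hd ha hν hu hN hinj
    _ ≤ C * D * (4 * Real.log p) ^ m + m * D * (4 * Real.log p) ^ m := by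
      gcongr ?_ * ?_ ^ m + ?_
      · linarith
      · rw [div_eq_mul_one_div]
        calc (m : ℝ) * (1 / p) ≤ m * D := by gcongr
          _ ≤ _ := le_mul_of_one_le_right (by positivity) (one_le_pow₀ (by linarith))
    _ = (C + m) * 4 ^ m * D * Real.log p ^ m := by rw [mul_pow]; ring

theorem stmt4 (m d ν : ℕ) (hm : 1 ≤ m) (hd : 2 ≤ d) (hν : 1 ≤ ν) :
    ∃ c : ℝ, 0 < c ∧
      ∀ (s : ℕ → ℕ → ℕ) (p : ℕ), p.Prime →
        ∀ F : Fin (m + 1) → MvPolynomial (Fin (m + 1)) (ZMod p),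
          IsFSystem m s F →
          (Finset.univ.sup fun i => (F i).totalDegree) = d →
          (∏ i ∈ Finset.range m, s i (i + 1)) ≠ 0 →
          ∀ (u : ℕ → Fin (m + 1) → ZMod p) (τ : ℕ),
            (∀ n i, u (n + 1) i = MvPolynomial.eval (u n) (F i)) →
            0 < τ → (∀ n, u (n + τ) = u n) →
            (∀ t, 0 < t → (∀ n, u (n + t) = u n) → τ ≤ t) →
            ∀ N : ℕ, 0 < N → N ≤ τ →
              discrepancy m N (fun n j => ((u n j.castSucc).val : ℝ) / (p : ℝ)) ≤
                c * (p : ℝ) ^ (((m : ℝ) ^ 2 + (m : ℝ) * (ν : ℝ) + (m : ℝ)) /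
                      (2 * (ν : ℝ) * ((m : ℝ) + (ν : ℝ)))) *
                  (N : ℝ) ^ (-(1 : ℝ) / (2 * (ν : ℝ))) * (Real.log p) ^ m := by
  obtain ⟨c, hc, hbound⟩ := stmt4_general m d ν hν
  refine ⟨c, hc, fun s p hp F hF hdeg hs u τ hu hτ hper hmin N hN hNτ => ?_⟩
  have := Fact.mk hp
  obtain ⟨G, hG⟩ := hF.exists_isLinkedTriangular hs
  have hinj : Set.InjOn u (Set.Iio τ) :=
    injOn_Iio_of_forall_period_le (f := fun w i => eval w (F i)) (fun n => funext (hu n)) hτ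
      (by simpa using hper 0) hmin
  simpa only [discrepancyRate, ← mul_assoc] using hbound p hp F G hG
    (fun i => hdeg ▸ Finset.le_sup (f := fun i => (F i).totalDegree) (Finset.mem_univ i)) u hu N hN
    (hinj.mono (Set.Iio_subset_Iio hNτ))
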